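/- arXiv:1408.5793 — 11 statements merged into one kernel-verified Lean document; each statement's English description precedes it below -/
import Mathlib

section
/- Let (X,d) be a metric space containing at least two points which admits dilations of every factor fixing a base point, i.e., there is a point x₀ ∈ X such that for every λ > 0 there exists a homeomorphism f_λ : X → X with f_λ(x₀) = x₀ and d(f_λ(x), f_λ(y)) = λ·d(x,y) for all x,y ∈ X. Then the 1-dimensional Hausdorff measure of X is infinite; in particular, the Hausdorff dimension of X is at least 1. -/
open MeasureTheory

/-- A metric space with at least two points admitting dilations of every factor fixing a
base point has infinite Hausdorff 1-measure, and hence Hausdorff dimension at least 1. -/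
theorem hausdorff_dim_ge_one_of_dilations
    {X : Type*} [MetricSpace X] [MeasurableSpace X] [BorelSpace X]
    (htwo : ∃ x y : X, x ≠ y)
    (hdil : ∃ x₀ : X, ∀ lam : ℝ, 0 < lam →
      ∃ f : X ≃ₜ X, f x₀ = x₀ ∧ ∀ x y, dist (f x) (f y) = lam * dist x y) :
    μH[1] (Set.univ : Set X) = ⊤ ∧ 1 ≤ dimH (Set.univ : Set X) := by
  have key : μH[1] (Set.univ : Set X) = ⊤ := by
    obtain ⟨x₀, h⟩ := hdil
    obtain ⟨z, hz⟩ : ∃ z : X, z ≠ x₀ := by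
      obtain ⟨x, y, hxy⟩ := htwo
      by_cases hx : x = x₀
      · exact ⟨y, fun hy => hxy (hx.trans hy.symm)⟩
      · exact ⟨x, hx⟩
    have hpos : 0 < dist z x₀ := dist_pos.mpr hz
    have hsub : Set.Ioi (0 : ℝ) ⊆ (fun x : X => dist x x₀) '' Set.univ := by
      intro t ht
      obtain ⟨f, hf0, hf⟩ := h (t / dist z x₀) (div_pos ht hpos)
      refine ⟨f z, Set.mem_univ _, ?_⟩
      have h1 := hf z x₀
      rw [hf0, div_mul_cancel₀ _ hpos.ne'] at h1
      exact h1
    have hle := ((LipschitzWith.dist_left x₀).lipschitzOnWith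
      (s := Set.univ)).hausdorffMeasure_image_le (zero_le_one (α := ℝ))
    have h2 := (measure_mono (μ := (μH[1] : Measure ℝ)) hsub).trans hle
    rw [hausdorffMeasure_real, Real.volume_Ioi] at h2
    simpa using h2
  exact ⟨key, by
    have := le_dimH_of_hausdorffMeasure_eq_top (d := 1) (s := (Set.univ : Set X))
      (by simpa using key)
    simpa using this⟩
end

section
/- Let (X,d) be a locally compact metric space whose isometry group acts transitively, i.e., for all x,y ∈ X there is a surjective isometry f : X → X with f(x) = y. Then (X,d) is a complete metric space. -/
/-- A locally compact metric space whose isometry group acts transitively is complete. -/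
theorem complete_of_locallyCompact_homogeneous
    {X : Type*} [MetricSpace X] [LocallyCompactSpace X]
    (htrans : ∀ x y : X, ∃ f : X → X, Function.Surjective f ∧
      (∀ u v, dist (f u) (f v) = dist u v) ∧ f x = y) :
    CompleteSpace X := by
  refine Metric.complete_of_cauchySeq_tendsto fun u hu => ?_
  obtain ⟨r, hr, hK⟩ := Metric.exists_isCompact_closedBall (u 0)
  obtain ⟨N, hN⟩ := Metric.cauchySeq_iff'.1 hu r hr
  obtain ⟨f, hs, hf, hfx⟩ := htrans (u 0) (u N)
  have hc : IsCompact (f '' Metric.closedBall (u 0) r) :=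
    hK.image (Isometry.of_dist_eq hf).continuous
  have hmem : ∀ n ≥ N, u n ∈ f '' Metric.closedBall (u 0) r := by
    intro n hn
    obtain ⟨y, hy⟩ := hs (u n)
    refine ⟨y, ?_, hy⟩
    rw [Metric.mem_closedBall, ← hf, hy, hfx]
    exact (hN n hn).le
  obtain ⟨x, -, hx⟩ := hc.isComplete (Filter.map u Filter.atTop) hu
    (Filter.le_principal_iff.2 (Filter.mem_map.2
      (Filter.mem_of_superset (Filter.mem_atTop N) hmem)))
  exact ⟨x, hx⟩
end

section
/- Let (X,d) be a locally compact metric space whose isometry group acts transitively (for all x,y ∈ X there is a surjective isometry f : X → X with f(x) = y), and which admits dilations of every factor fixing a base point: there is x₀ ∈ X such that for every λ > 0 there is a homeomorphism f_λ : X → X with f_λ(x₀) = x₀ and d(f_λ(x), f_λ(y)) = λ·d(x,y) for all x,y. Then (X,d) is proper: every closed ball in X is compact. -/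
/-- A locally compact metric space whose isometry group acts transitively and which admits
dilations of every factor fixing a base point is proper: every closed ball is compact. -/
theorem proper_of_locallyCompact_homogeneous_dilations
    {X : Type*} [MetricSpace X] [LocallyCompactSpace X]
    (htrans : ∀ x y : X, ∃ f : X → X, Function.Surjective f ∧
      (∀ u v, dist (f u) (f v) = dist u v) ∧ f x = y)
    (hdil : ∃ x₀ : X, ∀ lam : ℝ, 0 < lam →
      ∃ f : X ≃ₜ X, f x₀ = x₀ ∧ ∀ x y, dist (f x) (f y) = lam * dist x y) :
    ∀ (x : X) (r : ℝ), IsCompact (Metric.closedBall x r) := by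
  intro x r
  obtain ⟨x₀, h⟩ := hdil
  obtain ⟨ε, hε, hc⟩ := Metric.exists_isCompact_closedBall x₀
  set R : ℝ := |r| + dist x x₀ + 1 with hR
  have hRpos : 0 < R := by positivity
  obtain ⟨f, hf0, hf⟩ := h (R / ε) (by positivity)
  refine (hc.image f.continuous).of_isClosed_subset Metric.isClosed_closedBall ?_
  intro y hy
  refine ⟨f.symm y, ?_, f.apply_symm_apply y⟩
  rw [Metric.mem_closedBall] at hy ⊢
  have h1 := hf (f.symm y) x₀
  rw [f.apply_symm_apply, hf0] at h1
  have h2 : dist y x₀ ≤ R := by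
    have := dist_triangle y x x₀
    have := le_abs_self r
    linarith
  rw [h1, div_mul_eq_mul_div, div_le_iff₀ hε] at h2
  exact le_of_mul_le_mul_left h2 hRpos
end

section
/- Let (X,d) be a metric space that is locally compact, 2-point isometrically homogeneous, and admits dilations of every factor. If X has no between-point, then there exist p > 1 and L > 0 such that for every finite chain of points x₀, x₁, …, x_n in X one has d(x₀, x_n)^p ≤ L·Σ_{i=1}^{n} d(x_i, x_{i−1})^p. -/
open Finset

/-- A discrete intermediate value lemma. -/
lemma discrete_crossing (f : ℕ → ℝ) (c : ℝ) (h0 : f 0 ≤ c) :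
    ∀ n : ℕ, 0 < n → c ≤ f n → ∃ k, k < n ∧ f k ≤ c ∧ c ≤ f (k + 1) := by
  intro n
  induction n with
  | zero => intro h; omega
  | succ n ih =>
    intro _ hc
    by_cases h : f n ≤ c
    · exact ⟨n, by omega, h, hc⟩
    · have hn : 0 < n := by
        rcases Nat.eq_zero_or_pos n with rfl | h'
        · exact absurd h0 h
        · exact h'
      obtain ⟨k, hk, h1, h3⟩ := ih hn (le_of_lt (not_le.mp h))
      exact ⟨k, by omega, h1, h3⟩

/-- Uniform failure of approximate midpoints. -/
lemma no_approx_midpoint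
    {X : Type*} [MetricSpace X] [LocallyCompactSpace X]
    (h2 : ∀ x₁ x₂ y₁ y₂ : X, dist x₁ x₂ = dist y₁ y₂ →
      ∃ f : X → X, Function.Surjective f ∧ (∀ u v, dist (f u) (f v) = dist u v) ∧
        f x₁ = y₁ ∧ f x₂ = y₂)
    (hdil : ∀ lam : ℝ, 0 < lam →
      ∃ f : X ≃ₜ X, ∀ x y, dist (f x) (f y) = lam * dist x y)
    (hnb : ¬ ∃ z x y : X, x ≠ z ∧ y ≠ z ∧ dist x y = dist x z + dist z y) :
    ∃ m : ℝ, 1 / 2 < m ∧ ∀ x y z : X, x ≠ y →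
      m * dist x y ≤ dist x z ∨ m * dist x y ≤ dist z y := by
  by_cases hne : ∃ u v : X, u ≠ v
  swap
  · push Not at hne
    exact ⟨1, by norm_num, fun x y _ h => absurd (hne x y) h⟩
  obtain ⟨x0, v, huv⟩ := hne
  obtain ⟨r, hr, hK⟩ : ∃ r : ℝ, 0 < r ∧ IsCompact (Metric.closedBall x0 r) := by
    obtain ⟨K, hKc, hKn⟩ := exists_compact_mem_nhds x0
    obtain ⟨r, hr, hsub⟩ := Metric.nhds_basis_closedBall.mem_iff.mp hKn
    exact ⟨r, hr, hKc.of_isClosed_subset Metric.isClosed_closedBall hsub⟩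
  -- a point at distance `r` from `x0`
  have hd : 0 < dist x0 v := dist_pos.mpr huv
  obtain ⟨y0, hy0⟩ : ∃ y0, dist x0 y0 = r := by
    obtain ⟨f, hf⟩ := hdil (r / dist x0 v) (by positivity)
    obtain ⟨g, -, hg, hg1, -⟩ := h2 (f x0) (f x0) x0 x0 (by simp)
    refine ⟨g (f v), ?_⟩
    have := hg (f x0) (f v)
    rw [hg1, hf] at this
    rw [this]
    field_simp
  obtain ⟨z0, hz0, hmin⟩ := hK.exists_isMinOn (f := fun z => max (dist x0 z) (dist z y0))
    ⟨x0, Metric.mem_closedBall_self hr.le⟩ (by fun_prop)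
  have hM : r / 2 < max (dist x0 z0) (dist z0 y0) := by
    by_contra hcon
    push Not at hcon
    have h1 := (le_max_left _ _).trans hcon
    have h3 := (le_max_right _ _).trans hcon
    have ht := dist_triangle x0 z0 y0
    rw [hy0] at ht
    refine hnb ⟨z0, x0, y0, ?_, ?_, by linarith⟩
    · rintro rfl
      simp at ht
      linarith
    · rintro rfl
      simp at ht
      linarith
  set M := max (dist x0 z0) (dist z0 y0) with hMdef
  have hmr : ∀ z, min M r ≤ dist x0 z ∨ min M r ≤ dist z y0 := by
    intro z
    by_cases hz : dist z x0 ≤ r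
    · have := hmin (a := z) (Metric.mem_closedBall.mpr hz)
      have h5 : M ≤ max (dist x0 z) (dist z y0) := this
      rcases le_max_iff.mp h5 with h | h
      · exact Or.inl ((min_le_left _ _).trans h)
      · exact Or.inr ((min_le_left _ _).trans h)
    · left
      rw [dist_comm x0 z]
      exact (min_le_right _ _).trans (not_le.mp hz).le
  refine ⟨min M r / r, ?_, ?_⟩
  · rw [lt_div_iff₀ hr]
    exact lt_min (by linarith) (by linarith)
  · intro x y z hxy
    have hD : 0 < dist x y := dist_pos.mpr hxy
    obtain ⟨f, hf⟩ := hdil (r / dist x y) (by positivity)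
    obtain ⟨g, -, hg, hg1, hg2⟩ := h2 (f x) (f y) x0 y0 (by rw [hf, hy0]; field_simp)
    have e1 : dist x0 (g (f z)) = r / dist x y * dist x z := by rw [← hg1, hg, hf]
    have e2 : dist (g (f z)) y0 = r / dist x y * dist z y := by rw [← hg2, hg, hf]
    have key : ∀ t, min M r ≤ r / dist x y * t → min M r / r * dist x y ≤ t := by
      intro t ht
      rw [div_mul_eq_mul_div, div_le_iff₀ hr]
      rw [div_mul_eq_mul_div, le_div_iff₀ hD] at ht
      linarith
    rcases hmr (g (f z)) with h | h
    · left; exact key _ (e1 ▸ h)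
    · right; exact key _ (e2 ▸ h)

/-- If a locally compact, 2-point isometrically homogeneous metric space admitting dilations
of every factor has no between-point, then there are `p > 1` and `L > 0` such that
`d(x₀,x_n)^p ≤ L * Σ d(x_i,x_{i-1})^p` for all finite chains of points. -/
theorem chain_inequality_of_no_between_point
    {X : Type*} [MetricSpace X] [LocallyCompactSpace X]
    (h2 : ∀ x₁ x₂ y₁ y₂ : X, dist x₁ x₂ = dist y₁ y₂ →
      ∃ f : X → X, Function.Surjective f ∧ (∀ u v, dist (f u) (f v) = dist u v) ∧
        f x₁ = y₁ ∧ f x₂ = y₂)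
    (hdil : ∀ lam : ℝ, 0 < lam →
      ∃ f : X ≃ₜ X, ∀ x y, dist (f x) (f y) = lam * dist x y)
    (hnb : ¬ ∃ z x y : X, x ≠ z ∧ y ≠ z ∧ dist x y = dist x z + dist z y) :
    ∃ p : ℝ, 1 < p ∧ ∃ L : ℝ, 0 < L ∧
      ∀ (n : ℕ) (x : ℕ → X),
        dist (x 0) (x n) ^ p ≤ L * ∑ i ∈ Finset.range n, dist (x (i + 1)) (x i) ^ p := by
  obtain ⟨m, hm, hmid⟩ := no_approx_midpoint h2 hdil hnb
  obtain ⟨a, ha, ham⟩ := exists_between hm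
  have ha0 : 0 < a := by linarith
  set η := m - a with hη
  have hη0 : 0 < η := by linarith
  obtain ⟨p, hp, hap⟩ : ∃ p : ℝ, 1 < p ∧ 1 / 2 < a ^ p := by
    have hc : ContinuousAt (fun p : ℝ => a ^ p) 1 := Real.continuousAt_const_rpow ha0.ne'
    have he : ∀ᶠ p in nhds (1 : ℝ), 1 / 2 < a ^ p :=
      hc.eventually (lt_mem_nhds (by simpa using ha))
    have he2 : ∀ᶠ p in nhdsWithin (1 : ℝ) (Set.Ioi 1), 1 / 2 < a ^ p :=
      he.filter_mono nhdsWithin_le_nhds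
    obtain ⟨p, h1, h3⟩ := (he2.and self_mem_nhdsWithin).exists
    exact ⟨p, h3, h1⟩
  have hp0 : 0 < p := by linarith
  have hηp : 0 < η ^ p := Real.rpow_pos_of_pos hη0 p
  refine ⟨p, hp, (η ^ p)⁻¹, by positivity, ?_⟩
  intro n
  induction n using Nat.strong_induction_on with
  | _ n ih =>
  intro x
  rcases Nat.eq_zero_or_pos n with rfl | hn
  · simp [Real.zero_rpow hp0.ne']
  by_contra hcon
  push Not at hcon
  set s : ℕ → ℝ := fun i => dist (x (i + 1)) (x i) ^ p with hs
  have hs0 : ∀ i, 0 ≤ s i := fun i => Real.rpow_nonneg dist_nonneg p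
  set S := ∑ i ∈ Finset.range n, s i with hS
  have hS0 : 0 ≤ S := Finset.sum_nonneg fun i _ => hs0 i
  set D := dist (x 0) (x n) with hD
  have hDp : 0 < D ^ p := lt_of_le_of_lt (by positivity) hcon
  have hD0 : 0 < D := by
    rcases (dist_nonneg : 0 ≤ D).eq_or_lt with h | h
    · rw [hD, ← h, Real.zero_rpow hp0.ne'] at hDp
      exact absurd hDp (lt_irrefl _)
    · exact h
  obtain ⟨k, hk, hk1, hk2⟩ := discrete_crossing (fun j => ∑ i ∈ Finset.range j, s i) (S / 2)
    (by simp; linarith) n hn (by change S / 2 ≤ S; linarith)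
  have hlt : ∀ t : ℝ, 0 ≤ t → t ^ p ≤ (η ^ p)⁻¹ * (S / 2) → t < a * D := by
    intro t ht h
    rw [← Real.rpow_lt_rpow_iff ht (by positivity) hp0, Real.mul_rpow ha0.le hD0.le]
    nlinarith
  have hi : (0 : ℝ) ≤ (η ^ p)⁻¹ := by positivity
  have A1 : dist (x 0) (x k) < a * D :=
    hlt _ dist_nonneg ((ih k hk x).trans (mul_le_mul_of_nonneg_left hk1 hi))
  have A2 : dist (x (k + 1)) (x n) < a * D := by
    have h := ih (n - (k + 1)) (by omega) (fun i => x (k + 1 + i))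
    have e : k + 1 + (n - (k + 1)) = n := by omega
    simp only [e, add_zero] at h
    refine hlt _ dist_nonneg (h.trans (mul_le_mul_of_nonneg_left ?_ hi))
    have hsplit := Finset.sum_range_add s (k + 1) (n - (k + 1))
    rw [e] at hsplit
    have : ∑ i ∈ Finset.range (n - (k + 1)), s (k + 1 + i) ≤ S / 2 := by
      linarith
    exact this
  have A3 : dist (x (k + 1)) (x k) < η * D := by
    rw [← Real.rpow_lt_rpow_iff dist_nonneg (by positivity) hp0, Real.mul_rpow hη0.le hD0.le]
    have h1 : s k ≤ S := Finset.single_le_sum (fun i _ => hs0 i) (Finset.mem_range.mpr hk)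
    have h3 : S < η ^ p * D ^ p := by
      rwa [inv_mul_lt_iff₀ hηp] at hcon
    exact lt_of_le_of_lt h1 h3
  have ht := dist_triangle (x k) (x (k + 1)) (x n)
  rw [dist_comm (x k) (x (k + 1))] at ht
  have hsum : a * D + η * D = m * D := by rw [hη]; ring
  have hpos : 0 < η * D := by positivity
  rcases hmid (x 0) (x n) (x k) (dist_pos.mp hD0) with h | h
  · linarith
  · linarith
end

section
/- Let (X,d) be a metric space that is locally compact, 2-point isometrically homogeneous, and admits dilations of every factor. Let a,b ∈ X with d(a,b) = 1, let p ≥ 1, and suppose φ(p) = inf_{x ∈ X} (d(a,x)^p + d(x,b)^p) < 1. Then for every δ > 0 there is a finite chain of points a = x₀, x₁, …, x_n = b in X with Σ_{i=1}^{n} d(x_i, x_{i−1})^p < δ. -/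
theorem chain_concat {X : Type*} [MetricSpace X] (p : ℝ) {u v w : X} {s t : ℝ}
    (h1 : ∃ (n : ℕ) (x : ℕ → X), x 0 = u ∧ x n = v ∧
      ∑ i ∈ Finset.range n, dist (x (i + 1)) (x i) ^ p = s)
    (h2 : ∃ (n : ℕ) (x : ℕ → X), x 0 = v ∧ x n = w ∧
      ∑ i ∈ Finset.range n, dist (x (i + 1)) (x i) ^ p = t) :
    ∃ (n : ℕ) (x : ℕ → X), x 0 = u ∧ x n = w ∧
      ∑ i ∈ Finset.range n, dist (x (i + 1)) (x i) ^ p = s + t := by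
  obtain ⟨n, x, hx0, hxn, hs⟩ := h1
  obtain ⟨m, y, hy0, hym, ht⟩ := h2
  have hz1 : ∀ i, i ≤ n → (fun i => if i < n then x i else y (i - n)) i = x i := by
    intro i hi
    rcases hi.lt_or_eq with h | h
    · simp [h]
    · subst h
      simp [hy0, hxn]
  have hz2 : ∀ i, (fun i => if i < n then x i else y (i - n)) (n + i) = y i := by
    intro i
    simp
  generalize (fun i => if i < n then x i else y (i - n)) = z at hz1 hz2
  refine ⟨n + m, z, ?_, ?_, ?_⟩
  · rw [hz1 0 (Nat.zero_le _), hx0]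
  · rw [hz2, hym]
  · rw [Finset.sum_range_add, ← hs, ← ht]
    congr 1
    · apply Finset.sum_congr rfl
      intro i hi
      have hi := Finset.mem_range.1 hi
      rw [hz1 _ hi, hz1 _ hi.le]
    · apply Finset.sum_congr rfl
      intro i _
      rw [add_assoc, hz2, hz2]

/-- If `X` is locally compact, 2-point isometrically homogeneous, admits dilations of every
factor, `d(a,b) = 1`, and `φ(p) < 1`, then there are chains from `a` to `b` with arbitrarily
small `p`-energy `Σ d(x_i,x_{i-1})^p`. -/
theorem small_chains_of_gauge_lt_one
    {X : Type*} [MetricSpace X] [LocallyCompactSpace X]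
    (h2 : ∀ x₁ x₂ y₁ y₂ : X, dist x₁ x₂ = dist y₁ y₂ →
      ∃ f : X → X, Function.Surjective f ∧ (∀ u v, dist (f u) (f v) = dist u v) ∧
        f x₁ = y₁ ∧ f x₂ = y₂)
    (hdil : ∀ lam : ℝ, 0 < lam →
      ∃ f : X ≃ₜ X, ∀ x y, dist (f x) (f y) = lam * dist x y)
    (a b : X) (hab : dist a b = 1) (p : ℝ) (hp : 1 ≤ p)
    (hφ : (⨅ x : X, (dist a x ^ p + dist x b ^ p)) < 1) :
    ∀ δ : ℝ, 0 < δ → ∃ (n : ℕ) (x : ℕ → X), x 0 = a ∧ x n = b ∧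
      ∑ i ∈ Finset.range n, dist (x (i + 1)) (x i) ^ p < δ := by
  intro δ hδ
  haveI : Nonempty X := ⟨a⟩
  obtain ⟨m, hm⟩ := exists_lt_of_ciInf_lt hφ
  set c := dist a m ^ p + dist m b ^ p with hc
  have hc0 : 0 ≤ c := by positivity
  have hp0 : p ≠ 0 := by linarith
  have mid : ∀ u v : X, ∃ w, dist u w ^ p + dist w v ^ p = c * dist u v ^ p := by
    intro u v
    by_cases huv : u = v
    · subst huv
      exact ⟨u, by simp [Real.zero_rpow hp0]⟩
    · have hd : 0 < dist u v := dist_pos.2 huv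
      obtain ⟨f, hf⟩ := hdil _ hd
      obtain ⟨g, -, hg, hga, hgb⟩ := h2 (f a) (f b) u v (by rw [hf, hab, mul_one])
      refine ⟨g (f m), ?_⟩
      have e1 : dist u (g (f m)) = dist u v * dist a m := by
        rw [← hf, ← hg (f a), hga]
      have e2 : dist (g (f m)) v = dist u v * dist m b := by
        rw [← hf, ← hg _ (f b), hgb]
      rw [e1, e2, Real.mul_rpow hd.le dist_nonneg, Real.mul_rpow hd.le dist_nonneg, hc]
      ring
  have key : ∀ k : ℕ, ∀ u v : X, ∃ (n : ℕ) (x : ℕ → X), x 0 = u ∧ x n = v ∧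
      ∑ i ∈ Finset.range n, dist (x (i + 1)) (x i) ^ p = c ^ k * dist u v ^ p := by
    intro k
    induction k with
    | zero =>
      intro u v
      exact ⟨1, fun i => if i = 0 then u else v, by simp, by simp, by simp [dist_comm]⟩
    | succ k ih =>
      intro u v
      obtain ⟨w, hw⟩ := mid u v
      have := chain_concat p (ih u w) (ih w v)
      rwa [← mul_add, hw, ← mul_assoc, ← pow_succ] at this
  obtain ⟨k, hk⟩ := exists_pow_lt_of_lt_one hδ hm
  obtain ⟨n, x, h0, hn, hs⟩ := key k a b
  refine ⟨n, x, h0, hn, ?_⟩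
  rw [hs, hab, Real.one_rpow, mul_one]
  exact hk
end

section
/- Let (X,d) be a metric space that is 2-point isometrically homogeneous and admits dilations of every factor, let a,b ∈ X with d(a,b) = 1, and let p ≥ 1. If φ(p) = inf_{x ∈ X} (d(a,x)^p + d(x,b)^p) = 1, then d^p satisfies the triangle inequality; i.e., (X, d^p) is a metric space. -/
/-- If `X` is 2-point isometrically homogeneous, admits dilations of every factor,
`d(a,b) = 1`, and the gauge `φ(p) = 1`, then `d^p` satisfies the triangle inequality,
i.e. `(X, d^p)` is a metric space. -/
theorem dpow_metric_of_gauge_eq_one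
    {X : Type*} [MetricSpace X]
    (h2 : ∀ x₁ x₂ y₁ y₂ : X, dist x₁ x₂ = dist y₁ y₂ →
      ∃ f : X → X, Function.Surjective f ∧ (∀ u v, dist (f u) (f v) = dist u v) ∧
        f x₁ = y₁ ∧ f x₂ = y₂)
    (hdil : ∀ lam : ℝ, 0 < lam →
      ∃ f : X ≃ₜ X, ∀ x y, dist (f x) (f y) = lam * dist x y)
    (a b : X) (hab : dist a b = 1) (p : ℝ) (hp : 1 ≤ p)
    (hφ : (⨅ x : X, (dist a x ^ p + dist x b ^ p)) = 1) :
    ∀ x y z : X, dist x z ^ p ≤ dist x y ^ p + dist y z ^ p := by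
  intro x y z
  rcases eq_or_ne x z with rfl | hxz
  · rw [dist_self, Real.zero_rpow (by linarith)]
    positivity
  have hD : 0 < dist x z := dist_pos.mpr hxz
  obtain ⟨g, hg⟩ := hdil (dist x z)⁻¹ (inv_pos.mpr hD)
  obtain ⟨f, -, hf, hfa, hfb⟩ := h2 (g x) (g z) a b (by
    rw [hg, hab, inv_mul_cancel₀ hD.ne'])
  have hbdd : BddBelow (Set.range fun w : X => dist a w ^ p + dist w b ^ p) :=
    ⟨0, by rintro _ ⟨w, rfl⟩; positivity⟩
  have h := ciInf_le hbdd (f (g y))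
  rw [hφ] at h
  rw [← hfa, ← hfb, hf, hf, hg, hg, Real.mul_rpow (by positivity) dist_nonneg,
    Real.mul_rpow (by positivity) dist_nonneg, ← mul_add, Real.inv_rpow hD.le,
    inv_mul_eq_div, le_div_iff₀ (by positivity), one_mul] at h
  exact h
end

section
/- Let (X,d) be a metric space with at least two points that is locally compact, 2-point isometrically homogeneous, and admits dilations of every factor. If X has no between-point, then there exists p > 1 such that d^p is a metric on X and the metric space (X, d^p) has at least one between-point. -/
open Filter Topology

lemma frink_aux {X : Type*} (ρ : X → X → ℝ) (h0 : ∀ x y, 0 ≤ ρ x y)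
    (hK : ∀ x y z, ρ x z ≤ 2 * max (ρ x y) (ρ y z)) (hxx : ∀ x, ρ x x = 0) (n : ℕ) :
    ∀ u : ℕ → X, ρ (u 0) (u (n+2)) + 2 * ρ (u 0) (u 1) + 2 * ρ (u (n+1)) (u (n+2)) ≤
      4 * ∑ i ∈ Finset.range (n+2), ρ (u i) (u (i+1)) := by
  induction n using Nat.strong_induction_on with
  | _ n ih =>
  intro u
  have hends : ρ (u 0) (u 1) + ρ (u (n+1)) (u (n+2)) ≤
      ∑ i ∈ Finset.range (n+2), ρ (u i) (u (i+1)) := by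
    rw [Finset.sum_range_succ, Finset.sum_range_succ']
    have : 0 ≤ ∑ k ∈ Finset.range n, ρ (u (k + 1)) (u (k + 1 + 1)) :=
      Finset.sum_nonneg (fun _ _ => h0 _ _)
    simp only [zero_add]
    have e : n + 1 + 1 = n + 2 := rfl
    rw [e]
    linarith
  by_cases hz : ρ (u 0) (u (n+2)) = 0
  · have := h0 (u 0) (u 1)
    have := h0 (u (n+1)) (u (n+2))
    linarith
  have hpos : 0 < ρ (u 0) (u (n+2)) := lt_of_le_of_ne (h0 _ _) (Ne.symm hz)
  have hex : ∃ j, ¬ (ρ (u 0) (u (n+2)) ≤ 2 * ρ (u j) (u (n+2))) := by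
    refine ⟨n+2, ?_⟩
    rw [hxx]; linarith
  classical
  obtain ⟨j, hj, hjn, hmin⟩ : ∃ j, ¬ (ρ (u 0) (u (n+2)) ≤ 2 * ρ (u j) (u (n+2))) ∧ j ≤ n+2 ∧
      ∀ i < j, ρ (u 0) (u (n+2)) ≤ 2 * ρ (u i) (u (n+2)) := by
    refine ⟨Nat.find hex, Nat.find_spec hex, Nat.find_min' hex ?_, fun i hi => ?_⟩
    · rw [hxx]; linarith
    · exact not_not.1 (Nat.find_min hex hi)
  cases j with
  | zero => exfalso; apply hj; linarith
  | succ k =>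
  have h1 := hmin k (Nat.lt_succ_self k)
  have h2 : ρ (u 0) (u (n+2)) ≤ 2 * ρ (u 0) (u (k+1)) := by
    have := hK (u 0) (u (k+1)) (u (n+2))
    rcases max_cases (ρ (u 0) (u (k+1))) (ρ (u (k+1)) (u (n+2))) with h | h
    · rw [h.1] at this; exact this
    · rw [h.1] at this; exact absurd this hj
  have a1 := h0 (u 0) (u 1)
  have a2 := h0 (u (n+1)) (u (n+2))
  rcases Nat.eq_zero_or_pos k with hk | hk
  · subst hk
    simp only [zero_add] at h2
    linarith
  rcases Nat.lt_or_ge k (n+1) with hk2 | hk2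
  · obtain ⟨a, rfl⟩ : ∃ a, k = a + 1 := ⟨k - 1, by omega⟩
    obtain ⟨b, rfl⟩ : ∃ b, n = a + 1 + b := ⟨n - (a + 1), by omega⟩
    have i1 := ih a (by omega) u
    have i2 := ih b (by omega) (fun i => u (a + 1 + i))
    have hs : ∑ i ∈ Finset.range (a + 1 + (b + 2)), ρ (u i) (u (i+1)) =
      ∑ i ∈ Finset.range (a + 1), ρ (u i) (u (i+1)) +
      ∑ i ∈ Finset.range (b + 2), ρ (u (a + 1 + i)) (u (a + 1 + i + 1)) :=
      Finset.sum_range_add _ _ _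
    have hs2 : ∑ i ∈ Finset.range (a + 2), ρ (u i) (u (i+1)) =
      ∑ i ∈ Finset.range (a + 1), ρ (u i) (u (i+1)) + ρ (u (a+1)) (u (a+2)) :=
      Finset.sum_range_succ _ _
    simp only [← add_assoc, add_zero] at i1 i2 hs hs2 h1 h2 ⊢
    have e : a + 1 + 1 = a + 2 := rfl
    simp only [e] at *
    linarith
  · have : k = n + 1 := by omega
    subst this
    linarith

lemma frink {X : Type*} (ρ : X → X → ℝ) (h0 : ∀ x y, 0 ≤ ρ x y)
    (hK : ∀ x y z, ρ x z ≤ 2 * max (ρ x y) (ρ y z)) (hxx : ∀ x, ρ x x = 0) (n : ℕ)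
    (u : ℕ → X) : ρ (u 0) (u n) ≤ 4 * ∑ i ∈ Finset.range n, ρ (u i) (u (i+1)) := by
  match n with
  | 0 => simp [hxx]
  | 1 => simp; linarith [h0 (u 0) (u 1)]
  | n+2 =>
    have := frink_aux ρ h0 hK hxx n u
    linarith [h0 (u 0) (u 1), h0 (u (n+1)) (u (n+2))]

inductive Ch {X : Type*} (ρ : X → X → ℝ) (x : X) : X → ℝ → Prop
  | nil : Ch ρ x x 0
  | snoc {y z : X} {s : ℝ} : Ch ρ x y s → Ch ρ x z (s + ρ y z)

lemma Ch.seq {X : Type*} {ρ : X → X → ℝ} {x y : X} {s : ℝ} (h : Ch ρ x y s) :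
    ∃ (n : ℕ) (u : ℕ → X), u 0 = x ∧ u n = y ∧
      s = ∑ i ∈ Finset.range n, ρ (u i) (u (i+1)) := by
  induction h with
  | nil => exact ⟨0, fun _ => x, rfl, rfl, by simp⟩
  | @snoc y z s _ ih =>
    obtain ⟨n, u, hu0, hun, hs⟩ := ih
    refine ⟨n+1, fun i => if i ≤ n then u i else z, by simp [hu0], by simp, ?_⟩
    rw [Finset.sum_range_succ, hs]
    congr 1
    · apply Finset.sum_congr rfl
      intro i hi
      have hi := Finset.mem_range.1 hi
      have h1 : i ≤ n := by omega
      have h2 : i + 1 ≤ n := by omega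
      simp [h1, h2]
    · simp [hun]

lemma Ch.trans {X : Type*} {ρ : X → X → ℝ} {x y z : X} {s t : ℝ} (h : Ch ρ x y s)
    (h' : Ch ρ y z t) : Ch ρ x z (s + t) := by
  induction h' with
  | nil => simpa using h
  | snoc _ ih => rw [← add_assoc]; exact ih.snoc

lemma Ch.map {X : Type*} {ρ : X → X → ℝ} {x y : X} {s : ℝ} (h : Ch ρ x y s)
    (f : X → X) (c : ℝ) (hf : ∀ u v, ρ (f u) (f v) = c * ρ u v) :
    Ch ρ (f x) (f y) (c * s) := by
  induction h with
  | nil => simpa using Ch.nil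
  | snoc _ ih => rw [mul_add, ← hf]; exact ih.snoc

/-- A quasi-metric with constant two, all of whose pairs are similar, is a metric. -/
lemma tri_of_frink {X : Type*} (ρ : X → X → ℝ) (h0 : ∀ x y, 0 ≤ ρ x y)
    (hK : ∀ x y z, ρ x z ≤ 2 * max (ρ x y) (ρ y z)) (hxx : ∀ x, ρ x x = 0)
    (hne : ∀ x y, x ≠ y → 0 < ρ x y)
    (hsim : ∀ x z x' z' : X, x ≠ z → x' ≠ z' → ∃ (f : X → X) (c : ℝ), 0 < c ∧
      (∀ u v, ρ (f u) (f v) = c * ρ u v) ∧ f x = x' ∧ f z = z') (x y z : X) :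
    ρ x z ≤ ρ x y + ρ y z := by
  by_cases hxz : x = z
  · subst hxz; rw [hxx]; exact add_nonneg (h0 _ _) (h0 _ _)
  let S : Set ℝ := {r | ∃ x y s, x ≠ y ∧ Ch ρ x y s ∧ r = s / ρ x y}
  have hlow : ∀ r ∈ S, 1/4 ≤ r := by
    rintro r ⟨a, b, s, hab, hc, rfl⟩
    obtain ⟨n, u, rfl, rfl, rfl⟩ := hc.seq
    rw [le_div_iff₀ (hne _ _ hab)]
    have := frink ρ h0 hK hxx n u
    linarith
  have hSne : S.Nonempty := ⟨_, x, z, _, hxz, Ch.nil.snoc, rfl⟩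
  have hbdd : BddBelow S := ⟨1/4, hlow⟩
  have hC : 1/4 ≤ sInf S := le_csInf hSne hlow
  have hCle : ∀ a b s, Ch ρ a b s → sInf S * ρ a b ≤ s := by
    intro a b s hc
    by_cases hab : a = b
    · subst hab
      rw [hxx, mul_zero]
      obtain ⟨n, u, -, -, rfl⟩ := hc.seq
      exact Finset.sum_nonneg (fun _ _ => h0 _ _)
    · rw [← le_div_iff₀ (hne _ _ hab)]
      exact csInf_le hbdd ⟨a, b, s, hab, hc, rfl⟩
  have hopt : ∀ ε > 0, ∀ a b, ∃ s, Ch ρ a b s ∧ s ≤ (sInf S + ε) * ρ a b := by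
    intro ε hε a b
    by_cases hab : a = b
    · subst hab; exact ⟨0, Ch.nil, by rw [hxx, mul_zero]⟩
    obtain ⟨r, ⟨a', b', s, hab', hc, rfl⟩, hr⟩ := exists_lt_of_csInf_lt hSne
      (lt_add_of_pos_right (sInf S) hε)
    obtain ⟨f, c, hcpos, hf, rfl, rfl⟩ := hsim a' b' a b hab' hab
    refine ⟨c * s, hc.map f c hf, ?_⟩
    rw [div_lt_iff₀ (hne _ _ hab')] at hr
    rw [hf]
    nlinarith
  have key : ∀ ε > 0, sInf S * ρ x z ≤ sInf S * (ρ x y + ρ y z) + ε * (ρ x y + ρ y z) := by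
    intro ε hε
    obtain ⟨s, hs, hs'⟩ := hopt ε hε x y
    obtain ⟨t, ht, ht'⟩ := hopt ε hε y z
    have := hCle _ _ _ (hs.trans ht)
    linarith
  have key2 : sInf S * ρ x z ≤ sInf S * (ρ x y + ρ y z) := by
    have hT : Tendsto (fun ε : ℝ => sInf S * (ρ x y + ρ y z) + ε * (ρ x y + ρ y z)) (𝓝[>] 0)
        (𝓝 (sInf S * (ρ x y + ρ y z) + 0 * (ρ x y + ρ y z))) := by
      apply Tendsto.mono_left _ nhdsWithin_le_nhds
      exact Continuous.tendsto (by fun_prop) 0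
    rw [zero_mul, add_zero] at hT
    refine ge_of_tendsto hT ?_
    filter_upwards [self_mem_nhdsWithin] with ε hε using key ε hε
  exact le_of_mul_le_mul_left key2 (by linarith)

/-- If a metric space with at least two points is locally compact, 2-point isometrically
homogeneous, admits dilations of every factor, and has no between-point, then there is
`p > 1` such that `d^p` is a metric on `X` and `(X, d^p)` has a between-point. -/
theorem exists_p_desnowflake_with_between_point
    {X : Type*} [MetricSpace X] [LocallyCompactSpace X]
    (htwo : ∃ x y : X, x ≠ y)
    (h2 : ∀ x₁ x₂ y₁ y₂ : X, dist x₁ x₂ = dist y₁ y₂ →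
      ∃ f : X → X, Function.Surjective f ∧ (∀ u v, dist (f u) (f v) = dist u v) ∧
        f x₁ = y₁ ∧ f x₂ = y₂)
    (hdil : ∀ lam : ℝ, 0 < lam →
      ∃ f : X ≃ₜ X, ∀ x y, dist (f x) (f y) = lam * dist x y)
    (hnb : ¬ ∃ z x y : X, x ≠ z ∧ y ≠ z ∧ dist x y = dist x z + dist z y) :
    ∃ p : ℝ, 1 < p ∧
      (∀ x y z : X, dist x z ^ p ≤ dist x y ^ p + dist y z ^ p) ∧
      (∃ z x y : X, x ≠ z ∧ y ≠ z ∧ dist x y ^ p = dist x z ^ p + dist z y ^ p) := by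
  obtain ⟨x₀, z₀, hxz₀⟩ := htwo
  have hD : 0 < dist x₀ z₀ := dist_pos.2 hxz₀
  -- surjective similarities with a prescribed fixed point
  have hdil0 : ∀ (x : X) (lam : ℝ), 0 < lam → ∃ f : X → X, Function.Surjective f ∧ Continuous f ∧
      (∀ u v, dist (f u) (f v) = lam * dist u v) ∧ f x = x := by
    intro x lam hl
    obtain ⟨f, hf⟩ := hdil lam hl
    obtain ⟨g, hg, hgi, hgx, -⟩ := h2 (f x) (f x) x x (by simp)
    exact ⟨g ∘ f, hg.comp f.surjective, (Isometry.of_dist_eq hgi).continuous.comp f.continuous,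
      fun u v => by simp [hgi, hf], hgx⟩
  have hsim : ∀ x z x' z' : X, x ≠ z → x' ≠ z' → ∃ (f : X → X) (c : ℝ), 0 < c ∧
      (∀ u v, dist (f u) (f v) = c * dist u v) ∧ f x = x' ∧ f z = z' := by
    intro x z x' z' h h'
    have hd := dist_pos.2 h
    have hd' := dist_pos.2 h'
    obtain ⟨f, hf⟩ := hdil (dist x' z' / dist x z) (by positivity)
    obtain ⟨g, -, hgi, hgx, hgz⟩ := h2 (f x) (f z) x' z' (by rw [hf]; field_simp)
    exact ⟨g ∘ f, dist x' z' / dist x z, by positivity, fun u v => by simp [hgi, hf], hgx, hgz⟩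
  have hcpt : ∀ (x : X) (R : ℝ), 0 < R → IsCompact (Metric.closedBall x R) := by
    intro x R hR
    obtain ⟨r, hr, hc⟩ := Metric.exists_isCompact_closedBall x
    obtain ⟨f, hs, hfc, hf, hfx⟩ := hdil0 x (R / r) (by positivity)
    refine (hc.image hfc).of_isClosed_subset Metric.isClosed_closedBall ?_
    intro y hy
    obtain ⟨w, rfl⟩ := hs y
    refine ⟨w, ?_, rfl⟩
    rw [Metric.mem_closedBall] at hy ⊢
    have e : dist (f w) x = R / r * dist w x := by rw [← hf, hfx]
    rw [e, div_mul_eq_mul_div, div_le_iff₀ hr] at hy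
    exact le_of_mul_le_mul_left hy hR
  -- improvement step
  have step : ∀ p : ℝ, 1 ≤ p →
      (∀ z x y : X, x ≠ z → y ≠ z → dist x y ^ p < dist x z ^ p + dist z y ^ p) →
      ∃ q : ℝ, p < q ∧ ∀ x y z : X, dist x z ^ q ≤ dist x y ^ q + dist y z ^ q := by
    intro p hp hlt
    have hp0 : 0 < p := by linarith
    have hcont : Continuous (fun y : X => max (dist x₀ y) (dist y z₀)) := by fun_prop
    obtain ⟨y₀, -, hmin⟩ := (hcpt x₀ (dist x₀ z₀) hD).exists_isMinOn
      ⟨x₀, Metric.mem_closedBall_self hD.le⟩ hcont.continuousOn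
    set μ := max (dist x₀ y₀) (dist y₀ z₀) with hμ
    have hμD : μ ≤ dist x₀ z₀ := by
      have : μ ≤ max (dist x₀ x₀) (dist x₀ z₀) :=
        hmin (Metric.mem_closedBall_self hD.le)
      simpa using this
    have hμmin : ∀ y, μ ≤ max (dist x₀ y) (dist y z₀) := by
      intro y
      by_cases hy : y ∈ Metric.closedBall x₀ (dist x₀ z₀)
      · exact hmin hy
      · rw [Metric.mem_closedBall, not_le, dist_comm y x₀] at hy
        exact hμD.trans (hy.le.trans (le_max_left _ _))
    have hDp : 0 < dist x₀ z₀ ^ p := by positivity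
    have hμ0 : 0 ≤ μ := le_max_of_le_left dist_nonneg
    have hμp : dist x₀ z₀ ^ p < 2 * μ ^ p := by
      by_cases h1 : x₀ = y₀
      · have : dist x₀ z₀ ≤ μ := by rw [hμ, ← h1]; exact le_max_right _ _
        have := Real.rpow_le_rpow dist_nonneg this hp0.le
        linarith
      by_cases h3 : z₀ = y₀
      · have : dist x₀ z₀ ≤ μ := by rw [hμ, ← h3]; exact le_max_left _ _
        have := Real.rpow_le_rpow dist_nonneg this hp0.le
        linarith
      have := hlt y₀ x₀ z₀ h1 h3
      have a := Real.rpow_le_rpow dist_nonneg (le_max_left (dist x₀ y₀) (dist y₀ z₀)) hp0.le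
      have b := Real.rpow_le_rpow dist_nonneg (le_max_right (dist x₀ y₀) (dist y₀ z₀)) hp0.le
      rw [← hμ] at a b
      linarith
    have hμpos : 0 < μ := by
      rcases hμ0.eq_or_lt with h | h
      · rw [← h, Real.zero_rpow hp0.ne'] at hμp; linarith
      · exact h
    obtain ⟨q, hqlt, hpq⟩ : ∃ q, dist x₀ z₀ ^ q < 2 * μ ^ q ∧ p < q := by
      have c1 : ContinuousAt (fun q : ℝ => dist x₀ z₀ ^ q) p :=
        Real.continuousAt_const_rpow hD.ne'
      have c2 : ContinuousAt (fun q : ℝ => 2 * μ ^ q) p :=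
        (Real.continuousAt_const_rpow hμpos.ne').const_mul 2
      have hev : ∀ᶠ q in 𝓝 p, dist x₀ z₀ ^ q < 2 * μ ^ q := c1.eventually_lt c2 hμp
      have hev' : ∀ᶠ q in 𝓝[>] p, dist x₀ z₀ ^ q < 2 * μ ^ q := hev.filter_mono nhdsWithin_le_nhds
      exact (hev'.and self_mem_nhdsWithin).exists
    have hq0 : 0 < q := by linarith
    refine ⟨q, hpq, ?_⟩
    refine tri_of_frink (fun x y : X => dist x y ^ q) (fun x y => by positivity) ?_
      (fun x => by simp [Real.zero_rpow hq0.ne'])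
      (fun x y h => Real.rpow_pos_of_pos (dist_pos.2 h) _) ?_
    · intro x y z
      have hmaxpow : ∀ a b : ℝ, 0 ≤ a → 0 ≤ b → (max a b) ^ q ≤ max (a ^ q) (b ^ q) := by
        intro a b ha hb
        rcases max_choice a b with h | h <;> rw [h]
        · exact le_max_left _ _
        · exact le_max_right _ _
      by_cases hxz : x = z
      · subst hxz
        simp only [dist_self, Real.zero_rpow hq0.ne']
        have : 0 ≤ dist x y ^ q := by positivity
        have := this.trans (le_max_left _ (dist y x ^ q))
        linarith
      obtain ⟨f, c, hc, hf, hfx, hfz⟩ := hsim x z x₀ z₀ hxz hxz₀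
      have h1 := hμmin (f y)
      rw [← hfx, ← hfz, hf, hf, ← mul_max_of_nonneg _ _ hc.le] at h1
      rw [← hfx, ← hfz, hf] at hqlt
      have h3 := Real.rpow_le_rpow hμ0 h1 hq0.le
      have hmx : 0 ≤ max (dist x y) (dist y z) := le_max_of_le_left dist_nonneg
      rw [Real.mul_rpow hc.le hmx] at h3
      rw [Real.mul_rpow hc.le dist_nonneg] at hqlt
      have hcq : 0 < c ^ q := by positivity
      have h4 : dist x z ^ q ≤ 2 * (max (dist x y) (dist y z)) ^ q := by
        refine le_of_mul_le_mul_left ?_ hcq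
        linarith
      have := hmaxpow (dist x y) (dist y z) dist_nonneg dist_nonneg
      linarith
    · intro x z x' z' h h'
      obtain ⟨f, c, hc, hf, hfx, hfz⟩ := hsim x z x' z' h h'
      exact ⟨f, c ^ q, by positivity,
        fun u v => by simp only [hf]; rw [Real.mul_rpow hc.le dist_nonneg], hfx, hfz⟩
  -- not an ultrametric
  have hnu : ∃ x y z : X, max (dist x y) (dist y z) < dist x z := by
    by_contra hcon
    push Not at hcon
    have hclosed : IsClosed (Metric.ball x₀ (dist x₀ z₀)) := by
      rw [← isOpen_compl_iff, Metric.isOpen_iff]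
      intro y hy
      refine ⟨dist x₀ z₀, hD, fun w hw hw' => hy ?_⟩
      rw [Metric.mem_ball] at *
      exact (hcon y w x₀).trans_lt (max_lt (by rwa [dist_comm]) hw')
    have hc : IsCompact (Metric.ball x₀ (dist x₀ z₀)) :=
      (hcpt x₀ _ hD).of_isClosed_subset hclosed Metric.ball_subset_closedBall
    obtain ⟨m, hm, hmax⟩ := hc.exists_isMaxOn ⟨x₀, Metric.mem_ball_self hD⟩
      (f := fun y => dist x₀ y) (by fun_prop)
    rw [Metric.mem_ball, dist_comm] at hm
    obtain ⟨t, ht1, ht2⟩ := exists_between hm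
    have ht : 0 < t := dist_nonneg.trans_lt ht1
    obtain ⟨f, -, -, hf, hfx⟩ := hdil0 x₀ (t / dist x₀ z₀) (by positivity)
    have hft : dist x₀ (f z₀) = t := by
      nth_rw 1 [← hfx]; rw [hf]; field_simp
    have : dist x₀ (f z₀) ≤ dist x₀ m :=
      hmax (by rw [Metric.mem_ball, dist_comm, hft]; exact ht2)
    linarith
  let S : Set ℝ := {p | 1 ≤ p ∧ ∀ x y z : X, dist x z ^ p ≤ dist x y ^ p + dist y z ^ p}
  have h1S : (1:ℝ) ∈ S := ⟨le_rfl, fun x y z => by simpa using dist_triangle x y z⟩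
  have hbdd : BddAbove S := by
    obtain ⟨x, y, z, h⟩ := hnu
    set a := max (dist x y) (dist y z) with ha
    have ha0 : 0 ≤ a := le_max_of_le_left dist_nonneg
    have hd : 0 < dist x z := ha0.trans_lt h
    obtain ⟨N, hN⟩ := exists_pow_lt_of_lt_one (show (0:ℝ) < 1/2 by norm_num)
      ((div_lt_one hd).2 h)
    refine ⟨N, fun p hp => ?_⟩
    by_contra hlt
    push Not at hlt
    have hp0 : 0 ≤ p := by linarith [hp.1]
    have t1 := hp.2 x y z
    have t2 := Real.rpow_le_rpow dist_nonneg (le_max_left (dist x y) (dist y z)) hp0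
    have t3 := Real.rpow_le_rpow dist_nonneg (le_max_right (dist x y) (dist y z)) hp0
    rw [← ha] at t2 t3
    have hr0 : 0 ≤ a / dist x z := by positivity
    have t4 : (a / dist x z) ^ p ≤ (a / dist x z) ^ (N : ℝ) :=
      Real.rpow_le_rpow_of_exponent_ge_of_imp hr0 ((div_lt_one hd).2 h).le hlt.le
        (fun _ h => by linarith [hp.1])
    rw [Real.rpow_natCast, Real.div_rpow ha0 hd.le] at t4
    have hdp : 0 < dist x z ^ p := by positivity
    have t5 := t4.trans_lt hN
    rw [div_lt_iff₀ hdp] at t5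
    linarith
  have hP1 : 1 ≤ sSup S := le_csSup hbdd h1S
  have hPS : ∀ x y z : X, dist x z ^ sSup S ≤ dist x y ^ sSup S + dist y z ^ sSup S := by
    obtain ⟨u, -, hu, huS⟩ := exists_seq_tendsto_sSup ⟨1, h1S⟩ hbdd
    intro x y z
    have hc : ∀ a : ℝ, 0 ≤ a → Tendsto (fun n => a ^ u n) atTop (𝓝 (a ^ sSup S)) := by
      intro a _
      have : ContinuousAt (fun q : ℝ => a ^ q) (sSup S) :=
        Real.continuousAt_const_rpow' (by linarith)
      exact this.tendsto.comp hu
    exact le_of_tendsto_of_tendsto' (hc _ dist_nonneg) ((hc _ dist_nonneg).add (hc _ dist_nonneg))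
      (fun n => (huS n).2 x y z)
  refine ⟨sSup S, ?_, hPS, ?_⟩
  · obtain ⟨q, hq, hqt⟩ := step 1 le_rfl (by
      intro z x y hx hy
      simp only [Real.rpow_one]
      exact lt_of_le_of_ne (dist_triangle _ _ _) (fun h => hnb ⟨z, x, y, hx, hy, h⟩))
    exact hq.trans_le (le_csSup hbdd ⟨hq.le, hqt⟩)
  · by_contra hno
    obtain ⟨q, hq, hqt⟩ := step (sSup S) hP1 (by
      intro z x y hx hy
      exact lt_of_le_of_ne (hPS _ _ _) (fun h => hno ⟨z, x, y, hx, hy, h⟩))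
    exact absurd (le_csSup hbdd ⟨hP1.trans hq.le, hqt⟩) (not_le.2 hq)
end

section
/- Let (X,d) be a metric space that is locally compact, 2-point isometrically homogeneous, and admits dilations of every factor. If X has a between-point, then X is geodesic: for every x,y ∈ X there is an isometric embedding γ : [0, d(x,y)] → X with γ(0) = x and γ(d(x,y)) = y. -/
/-- If a locally compact, 2-point isometrically homogeneous metric space admitting dilations
of every factor has a between-point, then it is geodesic. -/
theorem geodesic_of_between_point
    {X : Type*} [MetricSpace X] [LocallyCompactSpace X]
    (h2 : ∀ x₁ x₂ y₁ y₂ : X, dist x₁ x₂ = dist y₁ y₂ →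
      ∃ f : X → X, Function.Surjective f ∧ (∀ u v, dist (f u) (f v) = dist u v) ∧
        f x₁ = y₁ ∧ f x₂ = y₂)
    (hdil : ∀ lam : ℝ, 0 < lam →
      ∃ f : X ≃ₜ X, ∀ x y, dist (f x) (f y) = lam * dist x y)
    (hb : ∃ z x y : X, x ≠ z ∧ y ≠ z ∧ dist x y = dist x z + dist z y) :
    ∀ x y : X, ∃ γ : ℝ → X, γ 0 = x ∧ γ (dist x y) = y ∧
      ∀ s ∈ Set.Icc (0 : ℝ) (dist x y), ∀ t ∈ Set.Icc (0 : ℝ) (dist x y),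
        dist (γ s) (γ t) = |s - t| := by
  obtain ⟨z₀, x₀, y₀, hx₀, hy₀, hxyz⟩ := hb
  have hprop : ProperSpace X := by
    obtain ⟨K, hK, hKn⟩ := exists_compact_mem_nhds z₀
    obtain ⟨r, hr, hrK⟩ := Metric.nhds_basis_closedBall.mem_iff.1 hKn
    have hcr : IsCompact (Metric.closedBall z₀ r) :=
      hK.of_isClosed_subset Metric.isClosed_closedBall hrK
    refine ProperSpace.of_isCompact_closedBall_of_le 1 fun q R hR => ?_
    have hR0 : 0 < R := by linarith
    obtain ⟨f, hf⟩ := hdil (R / r) (by positivity)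
    obtain ⟨g, hgs, hg, hgq, -⟩ := h2 (f z₀) (f z₀) q q (by simp)
    have hgc : Continuous g := (Isometry.of_dist_eq hg).continuous
    refine (hcr.image (hgc.comp f.continuous)).of_isClosed_subset Metric.isClosed_closedBall ?_
    intro w hw
    obtain ⟨v, rfl⟩ := hgs w
    obtain ⟨u, rfl⟩ := f.surjective v
    refine ⟨u, ?_, rfl⟩
    rw [Metric.mem_closedBall, ← hgq, hg, hf] at hw
    rw [Metric.mem_closedBall]
    have h3 : R / r * dist u z₀ ≤ R / r * r := by rwa [div_mul_cancel₀ R hr.ne']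
    exact le_of_mul_le_mul_left h3 (by positivity)
  have hbet : ∀ p q : X, p ≠ q → ∃ m, 0 < dist p m ∧ 0 < dist m q ∧
      dist p q = dist p m + dist m q := by
    intro p q hpq
    have h1 : 0 < dist x₀ z₀ := dist_pos.2 hx₀
    have h2' : 0 < dist z₀ y₀ := dist_pos.2 hy₀.symm
    have h3 : 0 < dist x₀ y₀ := by linarith
    have h4 : 0 < dist p q := dist_pos.2 hpq
    have h5 : 0 < dist p q / dist x₀ y₀ := by positivity
    obtain ⟨f, hf⟩ := hdil _ h5
    obtain ⟨g, -, hg, hgp, hgq⟩ := h2 (f x₀) (f y₀) p q (by rw [hf]; field_simp)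
    refine ⟨g (f z₀), ?_, ?_, ?_⟩
    · rw [← hgp, hg, hf]; positivity
    · rw [← hgq, hg, hf]; positivity
    · have e1 : dist p (g (f z₀)) = dist p q / dist x₀ y₀ * dist x₀ z₀ := by
        rw [← hf, ← hg (f x₀), hgp]
      have e2 : dist (g (f z₀)) q = dist p q / dist x₀ y₀ * dist z₀ y₀ := by
        rw [← hf, ← hg (f z₀), hgq]
      rw [e1, e2, ← mul_add, ← hxyz]; field_simp
  intro x y
  let good : Set (Set X) := {S | ∀ p ∈ S, dist x p ≤ dist x y ∧
    ∀ q ∈ S, dist p q = |dist x p - dist x q|}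
  obtain ⟨S, hxyS, hS⟩ := zorn_subset_nonempty good (by
    intro c hc hchain _
    refine ⟨⋃₀ c, ?_, fun s hs => Set.subset_sUnion_of_mem hs⟩
    rintro p ⟨A, hA, hpA⟩
    refine ⟨(hc hA p hpA).1, ?_⟩
    rintro q ⟨B, hB, hqB⟩
    rcases hchain.total hA hB with h | h
    · exact (hc hB p (h hpA)).2 q hqB
    · exact (hc hA p hpA).2 q (h hqB)) {x, y} (by
    intro p hp
    rcases hp with rfl | rfl
    · refine ⟨by simp, ?_⟩
      rintro q (rfl | rfl) <;> simp
    · refine ⟨le_rfl, ?_⟩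
      rintro q (rfl | rfl) <;> simp [dist_comm])
  have hxS : x ∈ S := hxyS (by simp)
  have hyS : y ∈ S := hxyS (by simp)
  have hSg : ∀ p ∈ S, dist x p ≤ dist x y ∧ ∀ q ∈ S, dist p q = |dist x p - dist x q| := hS.prop
  have hclosed : IsClosed S := by
    have hcl : closure S ∈ good := by
      intro p hp
      refine ⟨?_, ?_⟩
      · have hC : IsClosed {p | dist x p ≤ dist x y} :=
          isClosed_le (by fun_prop) (by fun_prop)
        exact closure_minimal (fun p hp => (hSg p hp).1) hC hp
      · intro q hq
        have hC : IsClosed {w : X × X | dist w.1 w.2 = |dist x w.1 - dist x w.2|} :=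
          isClosed_eq (by fun_prop) (by fun_prop)
        have hsub : S ×ˢ S ⊆ {w : X × X | dist w.1 w.2 = |dist x w.1 - dist x w.2|} :=
          fun w hw => (hSg w.1 hw.1).2 w.2 hw.2
        have := closure_minimal hsub hC
        rw [closure_prod_eq] at this
        exact this (Set.mk_mem_prod hp hq)
    exact closure_subset_iff_isClosed.1 (hS.le_of_ge hcl subset_closure)
  have hcomp : IsCompact S := by
    refine (isCompact_closedBall x (dist x y)).of_isClosed_subset hclosed fun p hp => ?_
    rw [Metric.mem_closedBall, dist_comm]
    exact (hSg p hp).1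
  have hsurj : ∀ t ∈ Set.Icc (0 : ℝ) (dist x y), ∃ p ∈ S, dist x p = t := by
    intro t ht
    by_contra hno
    push Not at hno
    have hφ : Continuous fun p : X => dist x p := by fun_prop
    obtain ⟨pa, ⟨hpaS, hpat⟩, hpa⟩ := (hcomp.inter_right
      (isClosed_le hφ continuous_const : IsClosed {p | dist x p ≤ t})).exists_isMaxOn
      ⟨x, hxS, by simpa using ht.1⟩ hφ.continuousOn
    obtain ⟨pb, ⟨hpbS, hpbt⟩, hpb⟩ := (hcomp.inter_right
      (isClosed_le continuous_const hφ : IsClosed {p | t ≤ dist x p})).exists_isMinOn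
      ⟨y, hyS, ht.2⟩ hφ.continuousOn
    simp only [Set.mem_ofPred_eq] at hpat hpbt
    have hat : dist x pa < t := lt_of_le_of_ne hpat (hno pa hpaS)
    have htb : t < dist x pb := lt_of_le_of_ne hpbt (hno pb hpbS).symm
    have hor : ∀ q ∈ S, dist x q ≤ dist x pa ∨ dist x pb ≤ dist x q := by
      intro q hq
      rcases le_total (dist x q) t with h | h
      · exact Or.inl (hpa ⟨hq, h⟩)
      · exact Or.inr (hpb ⟨hq, h⟩)
    have hab : dist pa pb = dist x pb - dist x pa := by
      rw [(hSg pa hpaS).2 pb hpbS, abs_sub_comm, abs_of_pos (by linarith)]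
    obtain ⟨m, hm1, hm2, hm⟩ := hbet pa pb (by rintro rfl; linarith)
    have hxm : dist x m = dist x pa + dist pa m := by
      have e1 := dist_triangle x pa m
      have e2 := dist_triangle x m pb
      linarith
    have key : ∀ q ∈ S, dist m q = |dist x m - dist x q| := by
      intro q hq
      have e1 := (hSg q hq).2 pa hpaS
      have e2 := (hSg q hq).2 pb hpbS
      have t1 := dist_triangle q pa m
      have t2 := dist_triangle q m pb
      have t3 := dist_triangle q pb m
      have t4 := dist_triangle q m pa
      rw [dist_comm m q]
      rw [dist_comm pb m] at t3
      rw [dist_comm m pa] at t4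
      rcases hor q hq with h | h
      · rw [abs_of_nonpos (by linarith)] at e1 e2
        rw [abs_of_nonneg (by linarith)]
        linarith
      · rw [abs_of_nonneg (by linarith)] at e1 e2
        rw [abs_of_nonpos (by linarith)]
        linarith
    have hins : insert m S ∈ good := by
      intro p hp
      rcases hp with rfl | hp
      · refine ⟨?_, ?_⟩
        · have := (hSg pb hpbS).1
          linarith
        · rintro q (rfl | hq)
          · simp
          · exact key q hq
      · refine ⟨(hSg p hp).1, ?_⟩
        rintro q (rfl | hq)
        · rw [dist_comm, abs_sub_comm]; exact key p hp
        · exact (hSg p hp).2 q hq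
    have hmS : m ∈ S := hS.le_of_ge hins (Set.subset_insert m S) (Set.mem_insert m S)
    rcases hor m hmS with h | h <;> linarith
  have hne : Nonempty X := ⟨x⟩
  choose! γ hγS hγ using hsurj
  refine ⟨γ, ?_, ?_, ?_⟩
  · have := hγ 0 ⟨le_rfl, dist_nonneg⟩
    exact (dist_eq_zero.1 this).symm
  · have hD : dist x y ∈ Set.Icc (0 : ℝ) (dist x y) := ⟨dist_nonneg, le_rfl⟩
    have e := (hSg _ (hγS _ hD)).2 y hyS
    rw [hγ _ hD, sub_self, abs_zero] at e
    exact dist_eq_zero.1 e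
  · intro s hs t ht
    rw [(hSg _ (hγS s hs)).2 _ (hγS t ht), hγ s hs, hγ t ht]
end

section
/- Let (X,d) be a metric space that is locally compact, 2-point isometrically homogeneous, and admits dilations of every factor. If X has no between-point, then there exists p > 1 such that d^p is a metric on X and the metric space (X, d^p) is geodesic: for every x,y ∈ X there is an isometric embedding γ : [0, d(x,y)^p] → (X, d^p) with γ(0) = x and γ(d(x,y)^p) = y. -/
namespace Desnow

lemma arch {x C : ℝ} (h : ∀ k : ℕ, k * x ≤ C) : x ≤ 0 := by
  by_contra hx
  push Not at hx
  obtain ⟨k, hk⟩ := exists_nat_gt (C / x)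
  have := h k
  rw [div_lt_iff₀ hx] at hk
  linarith

lemma mono_mul (s : ℕ → ℝ) (hmono : Monotone s) (h1 : s 1 = 1)
    (hmul : ∀ m n, s (m * n) = s m * s n) (h2 : 1 < s 2) (n : ℕ) (hn : 1 ≤ n) :
    s n = (n : ℝ) ^ (Real.log (s 2) / Real.log 2) := by
  have hpow : ∀ m k, s (m ^ k) = s m ^ k := by
    intro m k
    induction k with
    | zero => simp [h1]
    | succ k ih => rw [pow_succ, hmul, ih, pow_succ]
  have hsn : 0 < s n := by have := hmono hn; linarith
  have hn0 : (0 : ℝ) < n := by exact_mod_cast hn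
  have hl2 : 0 < Real.log 2 := Real.log_pos (by norm_num)
  have hls : 0 < Real.log (s 2) := Real.log_pos h2
  have key : ∀ k : ℕ, ∃ j : ℕ, j * Real.log 2 ≤ k * Real.log n ∧
      k * Real.log n ≤ (j + 1) * Real.log 2 ∧ j * Real.log (s 2) ≤ k * Real.log (s n) ∧
      k * Real.log (s n) ≤ (j + 1) * Real.log (s 2) := by
    intro k
    have hk : n ^ k ≠ 0 := pow_ne_zero _ (by omega)
    have a1 := Nat.pow_log_le_self 2 hk
    have a2 := (Nat.lt_pow_succ_log_self (b := 2) (by norm_num) (n ^ k)).le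
    refine ⟨Nat.log 2 (n ^ k), ?_, ?_, ?_, ?_⟩
    · rw [← Real.log_pow, ← Real.log_pow]
      exact Real.log_le_log (by positivity) (by exact_mod_cast a1)
    · rw [← Nat.cast_succ, ← Real.log_pow, ← Real.log_pow]
      exact Real.log_le_log (by positivity) (by exact_mod_cast a2)
    · rw [← Real.log_pow, ← Real.log_pow, ← hpow, ← hpow]
      refine Real.log_le_log ?_ (hmono a1)
      rw [hpow]; positivity
    · rw [← Nat.cast_succ, ← Real.log_pow, ← Real.log_pow, ← hpow, ← hpow]
      refine Real.log_le_log ?_ (hmono a2)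
      rw [hpow]; positivity
  have e1 : Real.log (s n) * Real.log 2 - Real.log n * Real.log (s 2) ≤ 0 := by
    apply arch (C := Real.log 2 * Real.log (s 2))
    intro k
    obtain ⟨j, b1, b2, b3, b4⟩ := key k
    nlinarith [mul_le_mul_of_nonneg_right b1 hls.le, mul_le_mul_of_nonneg_right b4 hl2.le]
  have e2 : Real.log n * Real.log (s 2) - Real.log (s n) * Real.log 2 ≤ 0 := by
    apply arch (C := Real.log 2 * Real.log (s 2))
    intro k
    obtain ⟨j, b1, b2, b3, b4⟩ := key k
    nlinarith [mul_le_mul_of_nonneg_right b2 hls.le, mul_le_mul_of_nonneg_right b3 hl2.le]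
  rw [Real.rpow_def_of_pos hn0, ← Real.exp_log hsn]
  congr 1
  field_simp
  linarith

/-- Homogeneous monotone associative operations are `ℓ^p` sums. -/
lemma op_eq (M : ℝ → ℝ → ℝ)
    (hmono : ∀ a b a' b', 0 ≤ a → 0 ≤ b → a ≤ a' → b ≤ b' → M a b ≤ M a' b')
    (hnn : ∀ a b, 0 ≤ a → 0 ≤ b → 0 ≤ M a b)
    (hassoc : ∀ a b c, 0 ≤ a → 0 ≤ b → 0 ≤ c → M (M a b) c = M a (M b c))
    (hhom : ∀ l a b, 0 < l → 0 ≤ a → 0 ≤ b → M (l * a) (l * b) = l * M a b)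
    (hz : ∀ a, 0 ≤ a → M a 0 = a) (hz' : ∀ a, 0 ≤ a → M 0 a = a)
    (h1 : 1 < M 1 1) (h2 : M 1 1 < 2) :
    ∃ p : ℝ, 1 < p ∧ ∀ a b, 0 ≤ a → 0 ≤ b → (M a b) ^ p = a ^ p + b ^ p := by
  let s : ℕ → ℝ := fun n => Nat.rec 0 (fun _ r => M r 1) n
  have s0 : s 0 = 0 := rfl
  have ss : ∀ n, s (n + 1) = M (s n) 1 := fun n => rfl
  have s1 : s 1 = 1 := by rw [show s 1 = M (s 0) 1 from ss 0, s0, hz' 1 (by norm_num)]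
  have snn : ∀ n, 0 ≤ s n := by
    intro n
    induction n with
    | zero => exact s0.ge
    | succ n ih => rw [ss]; exact hnn _ _ ih (by norm_num)
  have smono : Monotone s := by
    apply monotone_nat_of_le_succ
    intro n
    rw [ss]
    calc s n = M (s n) 0 := (hz _ (snn n)).symm
      _ ≤ _ := hmono _ _ _ _ (snn n) le_rfl le_rfl (by norm_num)
  have sadd : ∀ m n, s (m + n) = M (s m) (s n) := by
    intro m n
    induction n with
    | zero => rw [s0, hz _ (snn m)]; rfl
    | succ n ih => rw [← add_assoc, ss, ih, hassoc _ _ _ (snn _) (snn _) (by norm_num), ss]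
  have smul : ∀ m n, s (m * n) = s m * s n := by
    intro m n
    rcases Nat.eq_zero_or_pos m with rfl | hm
    · simp [s0]
    have hsm : 0 < s m := by have := smono hm; simp only [Nat.succ_eq_add_one, zero_add, s1] at this; linarith
    induction n with
    | zero => simp [s0]
    | succ n ih =>
      rw [mul_add, mul_one, sadd, ih, ss, ← hhom _ _ _ hsm (snn n) (by norm_num), mul_one]
  have s2 : s 2 = M 1 1 := by rw [show s 2 = M (s 1) 1 from ss 1, s1]
  set c := Real.log (s 2) / Real.log 2 with hc
  have hl2 : 0 < Real.log 2 := Real.log_pos (by norm_num)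
  have c0 : 0 < c := div_pos (Real.log_pos (s2 ▸ h1)) hl2
  have c1 : c < 1 := by
    rw [hc, div_lt_one hl2]
    exact Real.log_lt_log (by rw [s2]; linarith) (by rw [s2]; linarith)
  have hs : ∀ n : ℕ, s n = (n : ℝ) ^ c := by
    intro n
    rcases Nat.eq_zero_or_pos n with rfl | hn
    · simp [s0, Real.zero_rpow c0.ne']
    · exact mono_mul s smono s1 smul (s2 ▸ h1) n hn
  have hpc : ∀ x : ℝ, 0 ≤ x → (x ^ c⁻¹) ^ c = x := fun x hx => by
    rw [← Real.rpow_mul hx, inv_mul_cancel₀ c0.ne', Real.rpow_one]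
  have hcp : ∀ x : ℝ, 0 ≤ x → (x ^ c) ^ c⁻¹ = x := fun x hx => by
    rw [← Real.rpow_mul hx, mul_inv_cancel₀ c0.ne', Real.rpow_one]
  have hci : 0 < c⁻¹ := inv_pos.2 c0
  refine ⟨c⁻¹, (one_lt_inv₀ c0).2 c1, ?_⟩
  intro a b ha hb
  set A := a ^ c⁻¹ with hA
  set B := b ^ c⁻¹ with hB
  have hA0 : 0 ≤ A := Real.rpow_nonneg ha _
  have hB0 : 0 ≤ B := Real.rpow_nonneg hb _
  have ea : a = A ^ c := (hpc a ha).symm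
  have eb : b = B ^ c := (hpc b hb).symm
  have key : ∀ k : ℕ, k * (M a b ^ c⁻¹) ≤ k * (A + B) + 2 ∧ k * (A + B) ≤ k * (M a b ^ c⁻¹) + 2 := by
    intro k
    rcases Nat.eq_zero_or_pos k with rfl | hk
    · simp
    have hk0 : (0 : ℝ) < k := by exact_mod_cast hk
    have hkA : 0 ≤ k * A := by positivity
    have hkB : 0 ≤ k * B := by positivity
    have e : k * (M a b ^ c⁻¹) = M ((k * A) ^ c) ((k * B) ^ c) ^ c⁻¹ := by
      rw [Real.mul_rpow hk0.le hA0, Real.mul_rpow hk0.le hB0, ← ea, ← eb,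
        hhom _ _ _ (by positivity) ha hb, Real.mul_rpow (by positivity) (hnn _ _ ha hb),
        hcp _ hk0.le]
    have nat : ∀ m n : ℕ, M ((m : ℝ) ^ c) ((n : ℝ) ^ c) ^ c⁻¹ = m + n := by
      intro m n
      rw [← hs, ← hs, ← sadd, hs, hcp _ (by positivity)]; push_cast; rfl
    have l1 := Nat.floor_le hkA
    have l2 := Nat.floor_le hkB
    have u1 := Nat.lt_floor_add_one (k * A)
    have u2 := Nat.lt_floor_add_one (k * B)
    have lo := nat ⌊k * A⌋₊ ⌊k * B⌋₊
    have hi := nat (⌊k * A⌋₊ + 1) (⌊k * B⌋₊ + 1)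
    push_cast at hi
    have i1 : M ((⌊k * A⌋₊ : ℝ) ^ c) ((⌊k * B⌋₊ : ℝ) ^ c) ^ c⁻¹
        ≤ M ((k * A) ^ c) ((k * B) ^ c) ^ c⁻¹ := by
      refine Real.rpow_le_rpow (hnn _ _ (by positivity) (by positivity)) ?_ hci.le
      refine hmono _ _ _ _ (by positivity) (by positivity) ?_ ?_
      · exact Real.rpow_le_rpow (by positivity) l1 c0.le
      · exact Real.rpow_le_rpow (by positivity) l2 c0.le
    have i2 : M ((k * A) ^ c) ((k * B) ^ c) ^ c⁻¹
        ≤ M ((⌊k * A⌋₊ + 1 : ℝ) ^ c) ((⌊k * B⌋₊ + 1 : ℝ) ^ c) ^ c⁻¹ := by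
      refine Real.rpow_le_rpow (hnn _ _ (by positivity) (by positivity)) ?_ hci.le
      refine hmono _ _ _ _ (by positivity) (by positivity) ?_ ?_
      · exact Real.rpow_le_rpow (by positivity) u1.le c0.le
      · exact Real.rpow_le_rpow (by positivity) u2.le c0.le
    rw [e]
    constructor <;> nlinarith
  apply le_antisymm
  · rw [← sub_nonpos]
    apply arch (C := 2)
    intro k
    nlinarith [(key k).1]
  · rw [← sub_nonpos]
    apply arch (C := 2)
    intro k
    nlinarith [(key k).2]

section geo
variable {X : Type*} [MetricSpace X]

lemma chain {p : ℝ} (hp : 1 < p)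
    (hfill : ∀ (x y : X) (A B : ℝ), 0 ≤ A → 0 ≤ B → dist x y ^ p ≤ A + B →
      ∃ w, dist x w ^ p ≤ A ∧ dist w y ^ p ≤ B) (δ : ℝ) (hδ : 0 ≤ δ) (n : ℕ) :
    ∀ x y : X, dist x y ^ p ≤ n * δ → ∃ g : ℕ → X, g 0 = x ∧ g n = y ∧
      ∀ i < n, dist (g i) (g (i + 1)) ^ p ≤ δ := by
  induction n with
  | zero =>
    intro x y h
    simp only [Nat.cast_zero, zero_mul] at h
    have h0 := le_antisymm h (Real.rpow_nonneg dist_nonneg _)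
    rw [Real.rpow_eq_zero dist_nonneg (by linarith), dist_eq_zero] at h0
    exact ⟨fun _ => x, rfl, h0, by simp⟩
  | succ n ih =>
    intro x y h
    push_cast at h
    obtain ⟨w, h1, h2⟩ := hfill x y (n * δ) δ (by positivity) hδ (by linarith)
    obtain ⟨g, g0, gn, hg⟩ := ih x w h1
    refine ⟨fun i => if i ≤ n then g i else y, by simp [g0], by simp, ?_⟩
    intro i hi
    rcases Nat.lt_succ_iff_lt_or_eq.1 hi with h | rfl
    · simp only [h.le, if_true, Nat.succ_le_of_lt h]
      exact hg i h
    · simp [gn, h2]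

lemma geodesic [ProperSpace X] {p : ℝ} (hp : 1 < p)
    (htri : ∀ x y z : X, dist x z ^ p ≤ dist x y ^ p + dist y z ^ p)
    (hfill : ∀ (x y : X) (A B : ℝ), 0 ≤ A → 0 ≤ B → dist x y ^ p ≤ A + B →
      ∃ w, dist x w ^ p ≤ A ∧ dist w y ^ p ≤ B) (x y : X) :
    ∃ γ : ℝ → X, γ 0 = x ∧ γ (dist x y ^ p) = y ∧
        ∀ s ∈ Set.Icc (0 : ℝ) (dist x y ^ p), ∀ t ∈ Set.Icc (0 : ℝ) (dist x y ^ p),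
          dist (γ s) (γ t) ^ p = |s - t| := by
  have hp0 : 0 < p := by linarith
  set L := dist x y ^ p with hL
  have hL0 : 0 ≤ L := Real.rpow_nonneg dist_nonneg _
  rcases hL0.eq_or_lt with hLz | hLp
  · refine ⟨fun _ => x, rfl, ?_, ?_⟩
    · rw [hL, eq_comm, Real.rpow_eq_zero dist_nonneg hp0.ne', dist_eq_zero] at hLz
      exact hLz
    · rintro s ⟨s0, s1⟩ t ⟨t0, t1⟩
      have : s = t := by linarith
      simp [this, Real.zero_rpow hp0.ne']
  have hch : ∀ n : ℕ, ∃ g : ℕ → X, g 0 = x ∧ g (n + 1) = y ∧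
      ∀ i < n + 1, dist (g i) (g (i + 1)) ^ p ≤ L / (n + 1) := by
    intro n
    refine chain hp hfill (L / (n + 1)) (by positivity) (n + 1) x y ?_
    push_cast
    rw [mul_div_cancel₀ _ (by positivity)]
  choose g g0 gn hg using hch
  have hg2 : ∀ n i k, i + k ≤ n + 1 → dist (g n i) (g n (i + k)) ^ p ≤ k * (L / (n + 1)) := by
    intro n i k
    induction k with
    | zero => intro _; simp [Real.zero_rpow hp0.ne']
    | succ k ih =>
      intro h
      have a := ih (by omega)
      have b := hg n (i + k) (by omega)
      have c := htri (g n i) (g n (i + k)) (g n (i + k + 1))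
      push_cast
      rw [← add_assoc]
      linarith
  let idx : ℕ → ℝ → ℕ := fun n t => min (n + 1) ⌊t * (n + 1) / L⌋₊
  have hball : ∀ n t, g n (idx n t) ∈ Metric.closedBall x (dist x y) := by
    intro n t
    have h1 : idx n t ≤ n + 1 := min_le_left _ _
    have h := hg2 n 0 (idx n t) (by omega)
    rw [zero_add, g0] at h
    rw [Metric.mem_closedBall, dist_comm]
    have h3 : (idx n t : ℝ) * (L / (n + 1)) ≤ L := by
      have : (idx n t : ℝ) ≤ n + 1 := by exact_mod_cast h1
      calc (idx n t : ℝ) * (L / (n + 1)) ≤ (n + 1) * (L / (n + 1)) := by gcongr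
        _ = L := mul_div_cancel₀ _ (by positivity)
    exact (Real.rpow_le_rpow_iff dist_nonneg dist_nonneg hp0).1 (h.trans h3)
  let U : Ultrafilter ℕ := Ultrafilter.of Filter.atTop
  have hU : (U : Filter ℕ) ≤ Filter.atTop := Ultrafilter.of_le _
  have hlim : ∀ t, ∃ z : X, Filter.Tendsto (fun n => g n (idx n t)) U (nhds z) := by
    intro t
    obtain ⟨z, -, hz⟩ := (isCompact_closedBall x (dist x y)).ultrafilter_le_nhds
      (U.map (fun n => g n (idx n t))) (by
        rw [Filter.le_principal_iff]
        exact Filter.mem_map.2 (Filter.univ_mem' (fun n => hball n t)))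
    exact ⟨z, hz⟩
  choose γ hγ using hlim
  have e0 : γ 0 = x := by
    refine tendsto_nhds_unique (hγ 0) ?_
    have : (fun n => g n (idx n 0)) = fun _ => x := by
      funext n
      simp [idx, g0]
    rw [this]; exact tendsto_const_nhds
  have eL : γ L = y := by
    refine tendsto_nhds_unique (hγ L) ?_
    have : (fun n => g n (idx n L)) = fun _ => y := by
      funext n
      have : idx n L = n + 1 := by
        simp only [idx]
        rw [mul_div_cancel_left₀ _ hLp.ne']
        have : ((n : ℝ) + 1) = ((n + 1 : ℕ) : ℝ) := by push_cast; rfl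
        rw [this, Nat.floor_natCast, min_self]
      rw [this, gn]
    rw [this]; exact tendsto_const_nhds
  have hle : ∀ s t, 0 ≤ s → s ≤ t → t ≤ L → dist (γ s) (γ t) ^ p ≤ t - s := by
    intro s t hs hst ht
    have l1 : Filter.Tendsto (fun n => dist (g n (idx n s)) (g n (idx n t)) ^ p) U
        (nhds (dist (γ s) (γ t) ^ p)) :=
      ((hγ s).dist (hγ t)).rpow_const (Or.inr hp0.le)
    have l2 : Filter.Tendsto (fun n : ℕ => (t - s) + L * (1 / ((n : ℝ) + 1))) U
        (nhds ((t - s) + L * 0)) :=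
      (((tendsto_one_div_add_atTop_nhds_zero_nat (𝕜 := ℝ)).const_mul L).const_add (t - s)).mono_left hU
    rw [mul_zero, add_zero] at l2
    refine le_of_tendsto_of_tendsto' l1 l2 ?_
    intro n
    have hn : (0 : ℝ) < n + 1 := by positivity
    have hfl : ∀ r, 0 ≤ r → r ≤ L → idx n r = ⌊r * (n + 1) / L⌋₊ := by
      intro r hr hr'
      apply min_eq_right
      apply Nat.floor_le_of_le
      push_cast
      rw [div_le_iff₀ hLp]
      nlinarith
    have hmono : idx n s ≤ idx n t := by
      rw [hfl s hs (hst.trans ht), hfl t (hs.trans hst) ht]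
      apply Nat.floor_mono
      gcongr
    obtain ⟨k, hk⟩ := Nat.exists_eq_add_of_le hmono
    have h1 : idx n t ≤ n + 1 := min_le_left _ _
    have h := hg2 n (idx n s) k (by omega)
    rw [← hk] at h
    refine h.trans ?_
    have f1 : (idx n t : ℝ) ≤ t * (n + 1) / L := by
      rw [hfl t (hs.trans hst) ht]; exact Nat.floor_le (by have := hs.trans hst; positivity)
    have f2 : s * (n + 1) / L < idx n s + 1 := by
      rw [hfl s hs (hst.trans ht)]; exact Nat.lt_floor_add_one _
    have hk' : (idx n t : ℝ) = idx n s + k := by exact_mod_cast hk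
    have hkle : (k : ℝ) ≤ (t - s) * (n + 1) / L + 1 := by
      have : (t - s) * (n + 1) / L = t * (n + 1) / L - s * (n + 1) / L := by ring
      linarith
    calc (k : ℝ) * (L / (n + 1)) ≤ ((t - s) * (n + 1) / L + 1) * (L / (n + 1)) := by gcongr
      _ = _ := by field_simp
  have heq : ∀ s t, 0 ≤ s → s ≤ t → t ≤ L → dist (γ s) (γ t) ^ p = t - s := by
    intro s t hs hst ht
    apply le_antisymm (hle s t hs hst ht)
    have a1 := hle 0 s le_rfl hs (hst.trans ht)
    have a2 := hle t L (hs.trans hst) ht le_rfl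
    rw [e0] at a1
    rw [eL] at a2
    have a3 := htri x (γ s) y
    have a4 := htri (γ s) (γ t) y
    linarith
  refine ⟨γ, e0, eL, ?_⟩
  rintro s ⟨s0, s1⟩ t ⟨t0, t1⟩
  rcases le_total s t with h | h
  · rw [heq s t s0 h t1, abs_sub_comm, abs_of_nonneg (by linarith)]
  · rw [dist_comm, heq t s t0 h s1, abs_of_nonneg (by linarith)]

/-- Similarities move any pair of points to any proportional pair. -/
lemma mover (h2 : ∀ x₁ x₂ y₁ y₂ : X, dist x₁ x₂ = dist y₁ y₂ →
      ∃ f : X → X, Function.Surjective f ∧ (∀ u v, dist (f u) (f v) = dist u v) ∧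
        f x₁ = y₁ ∧ f x₂ = y₂)
    (hdil : ∀ lam : ℝ, 0 < lam →
      ∃ f : X ≃ₜ X, ∀ x y, dist (f x) (f y) = lam * dist x y)
    (l : ℝ) (hl : 0 < l) (x₁ x₂ y₁ y₂ : X) (h : dist y₁ y₂ = l * dist x₁ x₂) :
    ∃ f : X → X, Function.Surjective f ∧ (∀ u v, dist (f u) (f v) = l * dist u v) ∧
        f x₁ = y₁ ∧ f x₂ = y₂ := by
  obtain ⟨f, hf⟩ := hdil l hl
  obtain ⟨g, gs, gd, g1, g2⟩ := h2 (f x₁) (f x₂) y₁ y₂ (by rw [hf, h])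
  exact ⟨g ∘ f, gs.comp f.surjective, fun u v => by simp [gd, hf], g1, g2⟩

lemma proper [LocallyCompactSpace X] 
    (hm : ∀ (l : ℝ) (_ : 0 < l) (x₁ x₂ y₁ y₂ : X) (_ : dist y₁ y₂ = l * dist x₁ x₂),
      ∃ f : X → X, Function.Surjective f ∧ (∀ u v, dist (f u) (f v) = l * dist u v) ∧
        f x₁ = y₁ ∧ f x₂ = y₂) : ProperSpace X := by
  refine ProperSpace.of_isCompact_closedBall_of_le 1 ?_
  intro x R hR
  obtain ⟨r, hr, hc⟩ := Metric.exists_isCompact_closedBall x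
  have hl : 0 < R / r := by positivity
  obtain ⟨f, fs, fd, f1, -⟩ := hm (R / r) hl x x x x (by simp)
  have : Metric.closedBall x R = f '' Metric.closedBall x r := by
    ext z
    simp only [Metric.mem_closedBall, Set.mem_image]
    constructor
    · intro hz
      obtain ⟨w, rfl⟩ := fs z
      refine ⟨w, ?_, rfl⟩
      have hz : dist (f w) (f x) ≤ R := by rwa [f1]
      rw [fd, div_mul_eq_mul_div, div_le_iff₀ hr] at hz
      nlinarith
    · rintro ⟨w, hw, rfl⟩
      suffices dist (f w) (f x) ≤ R by rwa [f1] at this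
      rw [fd, div_mul_eq_mul_div, div_le_iff₀ hr]
      nlinarith
  rw [this]
  refine hc.image ?_
  exact (LipschitzWith.of_dist_le_mul (K := ⟨R / r, hl.le⟩) (fun u v => (fd u v).le)).continuous

/-- No nontrivial homogeneous ultrametric. -/
lemma not_ultra [ProperSpace X] (o : X) (hd : ∀ r : ℝ, 0 ≤ r → ∃ y : X, dist o y = r)
    (hu : ∀ x y z : X, dist x z ≤ max (dist x y) (dist y z)) : False := by
  choose y hy using fun n : ℕ => hd (1 + 1 / ((n : ℝ) + 1)) (by positivity)
  have hin : ∀ n, y n ∈ Metric.closedBall o 2 := by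
    intro n
    rw [Metric.mem_closedBall, dist_comm, hy]
    have : 1 / ((n : ℝ) + 1) ≤ 1 := by
      rw [div_le_one (by positivity)]; linarith [Nat.cast_nonneg (α := ℝ) n]
    linarith
  obtain ⟨z, -, φ, hφ, hz⟩ := (isCompact_closedBall o 2).tendsto_subseq hin
  have hc := hz.cauchySeq
  obtain ⟨N, hN⟩ := Metric.cauchySeq_iff.1 hc 1 one_pos
  have h1 := hN N le_rfl (N + 1) (Nat.le_succ N)
  simp only [Function.comp] at h1
  have h2 := hu o (y (φ (N + 1))) (y (φ N))
  have hlt : φ N < φ (N + 1) := hφ (Nat.lt_succ_self N)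
  have h3 : 1 / ((φ (N + 1) : ℝ) + 1) < 1 / ((φ N : ℝ) + 1) := by
    apply one_div_lt_one_div_of_lt (by positivity)
    have : (φ N : ℝ) < φ (N + 1) := by exact_mod_cast hlt
    linarith
  have h4 : 0 < 1 / ((φ N : ℝ) + 1) := by positivity
  rw [dist_comm (y (φ (N + 1))), hy, hy] at h2
  rcases le_max_iff.1 h2 with h | h <;> linarith

end geo

end Desnow

/-- If a locally compact, 2-point isometrically homogeneous metric space admitting dilations
of every factor has no between-point, then there is `p > 1` such that `d^p` is a metric on
`X` and `(X, d^p)` is geodesic. -/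
theorem desnowflake_geodesic_of_no_between_point
    {X : Type*} [MetricSpace X] [LocallyCompactSpace X]
    (h2 : ∀ x₁ x₂ y₁ y₂ : X, dist x₁ x₂ = dist y₁ y₂ →
      ∃ f : X → X, Function.Surjective f ∧ (∀ u v, dist (f u) (f v) = dist u v) ∧
        f x₁ = y₁ ∧ f x₂ = y₂)
    (hdil : ∀ lam : ℝ, 0 < lam →
      ∃ f : X ≃ₜ X, ∀ x y, dist (f x) (f y) = lam * dist x y)
    (hnb : ¬ ∃ z x y : X, x ≠ z ∧ y ≠ z ∧ dist x y = dist x z + dist z y) :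
    ∃ p : ℝ, 1 < p ∧
      (∀ x y z : X, dist x z ^ p ≤ dist x y ^ p + dist y z ^ p) ∧
      (∀ x y : X, ∃ γ : ℝ → X, γ 0 = x ∧ γ (dist x y ^ p) = y ∧
        ∀ s ∈ Set.Icc (0 : ℝ) (dist x y ^ p), ∀ t ∈ Set.Icc (0 : ℝ) (dist x y ^ p),
          dist (γ s) (γ t) ^ p = |s - t|) := by
  classical
  have hm := Desnow.mover h2 hdil
  have : ProperSpace X := Desnow.proper hm
  rcases subsingleton_or_nontrivial X with hX | hX
  · have hd : ∀ x y : X, dist x y = 0 := fun x y => by rw [Subsingleton.elim x y, dist_self]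
    refine ⟨2, by norm_num, fun x y z => by simp [hd], fun x y => ⟨fun _ => x, rfl, Subsingleton.elim _ _, ?_⟩⟩
    rintro s ⟨s0, s1⟩ t ⟨t0, t1⟩
    rw [hd, Real.zero_rpow (by norm_num)] at s1 t1
    have : s = t := by linarith
    simp [this]
  obtain ⟨o, o', hoo⟩ := exists_pair_ne X
  have hoo' : 0 < dist o o' := dist_pos.2 hoo
  have hd : ∀ r : ℝ, 0 ≤ r → ∃ y : X, dist o y = r := by
    intro r hr
    rcases hr.eq_or_lt with rfl | hr
    · exact ⟨o, dist_self o⟩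
    obtain ⟨f, -, fd, f1, -⟩ := hm (r / dist o o') (by positivity) o o o o (by simp)
    refine ⟨f o', ?_⟩
    nth_rewrite 1 [← f1]
    rw [fd]; field_simp
  -- maximal two step distance
  have hM : ∀ a b : ℝ, ∃ m : ℝ, 0 ≤ a → 0 ≤ b →
      (∃ x y z : X, dist x y ≤ a ∧ dist y z ≤ b ∧ dist x z = m) ∧
      ∀ x y z : X, dist x y ≤ a → dist y z ≤ b → dist x z ≤ m := by
    intro a b
    by_cases hab : 0 ≤ a ∧ 0 ≤ b
    swap
    · exact ⟨0, fun h h' => absurd ⟨h, h'⟩ hab⟩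
    obtain ⟨ha, hb⟩ := hab
    let K : Set (X × X) := {q | dist o q.1 ≤ a ∧ dist q.1 q.2 ≤ b}
    have hKc : IsCompact K := by
      refine ((isCompact_closedBall o a).prod (isCompact_closedBall o (a + b))).of_isClosed_subset ?_ ?_
      · have c1 : IsClosed {q : X × X | dist o q.1 ≤ a} :=
          isClosed_le (by fun_prop) (by fun_prop)
        have c2 : IsClosed {q : X × X | dist q.1 q.2 ≤ b} :=
          isClosed_le (by fun_prop) (by fun_prop)
        exact c1.inter c2
      · rintro ⟨y, z⟩ ⟨h1, h3⟩
        simp only at h1 h3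
        refine ⟨?_, ?_⟩
        · simpa [dist_comm] using h1
        · simp only [Metric.mem_closedBall]
          rw [dist_comm]
          linarith [dist_triangle o y z]
    obtain ⟨⟨y, z⟩, ⟨hy, hz⟩, hmax⟩ := hKc.exists_isMaxOn (f := fun q : X × X => dist o q.2)
      ⟨(o, o), by simp [K, ha, hb]⟩ (by fun_prop)
    refine ⟨dist o z, fun _ _ => ⟨⟨o, y, z, hy, hz, rfl⟩, ?_⟩⟩
    intro x' y' z' h1 h3
    obtain ⟨f, -, fd, f1, -⟩ := h2 x' x' o o (by simp)
    have : (f y', f z') ∈ K := by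
      refine ⟨?_, ?_⟩
      · simp only; rw [← f1, fd]; exact h1
      · simp only; rw [fd]; exact h3
    have := hmax this
    simp only [Set.mem_ofPred_eq] at this
    rw [← fd, f1]; exact this
  choose M hM using hM
  have hle : ∀ a b, 0 ≤ a → 0 ≤ b → ∀ x y z : X, dist x y ≤ a → dist y z ≤ b → dist x z ≤ M a b :=
    fun a b ha hb => (hM a b ha hb).2
  have hat := fun a b ha hb => (hM a b ha hb).1
  have hnn : ∀ a b, 0 ≤ a → 0 ≤ b → 0 ≤ M a b := by
    intro a b ha hb
    have := hle a b ha hb o o o (by simpa) (by simpa)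
    simpa using this
  have hmono : ∀ a b a' b', 0 ≤ a → 0 ≤ b → a ≤ a' → b ≤ b' → M a b ≤ M a' b' := by
    intro a b a' b' ha hb haa hbb
    obtain ⟨x, y, z, h1, h3, h4⟩ := hat a b ha hb
    rw [← h4]
    exact hle _ _ (ha.trans haa) (hb.trans hbb) x y z (h1.trans haa) (h3.trans hbb)
  have hfill : ∀ a b, 0 ≤ a → 0 ≤ b → ∀ x y : X, dist x y ≤ M a b →
      ∃ w, dist x w ≤ a ∧ dist w y ≤ b := by
    intro a b ha hb x y hxy
    rcases eq_or_ne x y with rfl | hne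
    · exact ⟨x, by simpa, by simpa⟩
    have hpos : 0 < dist x y := dist_pos.2 hne
    obtain ⟨x', w', y', h1, h3, h4⟩ := hat a b ha hb
    have hMp : 0 < M a b := hpos.trans_le hxy
    have hl1 : dist x y / M a b ≤ 1 := (div_le_one hMp).2 hxy
    have hl0 : 0 < dist x y / M a b := by positivity
    obtain ⟨f, -, fd, f1, f2⟩ := hm (dist x y / M a b) hl0 x' y' x y (by
      rw [h4]; field_simp)
    refine ⟨f w', ?_, ?_⟩
    · rw [← f1, fd]
      nlinarith [dist_nonneg (x := x') (y := w')]
    · rw [← f2, fd]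
      nlinarith [dist_nonneg (x := w') (y := y')]
  have hcomm : ∀ a b, 0 ≤ a → 0 ≤ b → M a b = M b a := by
    have : ∀ a b, 0 ≤ a → 0 ≤ b → M a b ≤ M b a := by
      intro a b ha hb
      obtain ⟨x, y, z, h1, h3, h4⟩ := hat a b ha hb
      rw [← h4, dist_comm]
      exact hle b a hb ha z y x (by rwa [dist_comm]) (by rwa [dist_comm])
    exact fun a b ha hb => le_antisymm (this a b ha hb) (this b a hb ha)
  have hassoc1 : ∀ a b c, 0 ≤ a → 0 ≤ b → 0 ≤ c → M (M a b) c ≤ M a (M b c) := by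
    intro a b c ha hb hc
    obtain ⟨x, y, z, h1, h3, h4⟩ := hat (M a b) c (hnn a b ha hb) hc
    obtain ⟨w, k1, k2⟩ := hfill a b ha hb x y h1
    rw [← h4]
    exact hle a (M b c) ha (hnn b c hb hc) x w z k1 (hle b c hb hc w y z k2 h3)
  have hassoc : ∀ a b c, 0 ≤ a → 0 ≤ b → 0 ≤ c → M (M a b) c = M a (M b c) := by
    intro a b c ha hb hc
    apply le_antisymm (hassoc1 a b c ha hb hc)
    have := hassoc1 c b a hc hb ha
    rwa [hcomm c b hc hb, hcomm b a hb ha, hcomm _ a (hnn b c hb hc) ha,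
      hcomm c _ hc (hnn a b ha hb)] at this
  have hhom1 : ∀ l a b, 0 < l → 0 ≤ a → 0 ≤ b → l * M a b ≤ M (l * a) (l * b) := by
    intro l a b hl ha hb
    obtain ⟨x, y, z, h1, h3, h4⟩ := hat a b ha hb
    obtain ⟨f, -, fd, -, -⟩ := hm l hl o o o o (by simp)
    rw [← h4, ← fd]
    exact hle _ _ (by positivity) (by positivity) _ (f y) _
      (by rw [fd]; gcongr) (by rw [fd]; gcongr)
  have hhom : ∀ l a b, 0 < l → 0 ≤ a → 0 ≤ b → M (l * a) (l * b) = l * M a b := by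
    intro l a b hl ha hb
    refine le_antisymm ?_ (hhom1 l a b hl ha hb)
    have := hhom1 l⁻¹ (l * a) (l * b) (by positivity) (by positivity) (by positivity)
    rw [inv_mul_cancel_left₀ hl.ne', inv_mul_cancel_left₀ hl.ne', inv_mul_le_iff₀ hl] at this
    exact this
  have hz : ∀ a, 0 ≤ a → M a 0 = a := by
    intro a ha
    apply le_antisymm
    · obtain ⟨x, y, z, h1, h3, h4⟩ := hat a 0 ha le_rfl
      linarith [dist_triangle x y z]
    · obtain ⟨y, hy⟩ := hd a ha
      have := hle a 0 ha le_rfl o y y hy.le (by simp)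
      linarith
  have hz' : ∀ a, 0 ≤ a → M 0 a = a := fun a ha => by rw [hcomm 0 a le_rfl ha, hz a ha]
  have hlt2 : M 1 1 < 2 := by
    obtain ⟨x, y, z, h1, h3, h4⟩ := hat 1 1 zero_le_one zero_le_one
    by_contra hcon
    push Not at hcon
    have ht := dist_triangle x y z
    refine hnb ⟨y, x, z, ?_, ?_, by linarith⟩
    · rw [← dist_pos]; linarith
    · rw [← dist_pos, dist_comm]; linarith
  have hgt1 : 1 < M 1 1 := by
    by_contra hcon
    push Not at hcon
    refine Desnow.not_ultra o hd ?_
    intro x y z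
    set m := max (dist x y) (dist y z) with hmd
    have m0 : 0 ≤ m := dist_nonneg.trans (le_max_left _ _)
    have h := hle m m m0 m0 x y z (le_max_left _ _) (le_max_right _ _)
    rcases m0.eq_or_lt with he | hp
    · rw [← he, hz 0 le_rfl] at h
      rw [← he]; exact h
    · have := hhom m 1 1 hp zero_le_one zero_le_one
      rw [mul_one] at this
      rw [this] at h
      nlinarith
  obtain ⟨p, hp, hMp⟩ := Desnow.op_eq M hmono hnn hassoc hhom hz hz' hgt1 hlt2
  have hp0 : 0 < p := by linarith
  have htri : ∀ x y z : X, dist x z ^ p ≤ dist x y ^ p + dist y z ^ p := by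
    intro x y z
    rw [← hMp _ _ dist_nonneg dist_nonneg]
    exact Real.rpow_le_rpow dist_nonneg (hle _ _ dist_nonneg dist_nonneg x y z le_rfl le_rfl) hp0.le
  refine ⟨p, hp, htri, Desnow.geodesic hp htri ?_⟩
  intro x y A B hA hB h
  have hA' : 0 ≤ A ^ p⁻¹ := Real.rpow_nonneg hA _
  have hB' : 0 ≤ B ^ p⁻¹ := Real.rpow_nonneg hB _
  have e : (M (A ^ p⁻¹) (B ^ p⁻¹)) ^ p = A + B := by
    rw [hMp _ _ hA' hB', Real.rpow_inv_rpow hA hp0.ne', Real.rpow_inv_rpow hB hp0.ne']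
  rw [← e, Real.rpow_le_rpow_iff dist_nonneg (hnn _ _ hA' hB') hp0] at h
  obtain ⟨w, k1, k2⟩ := hfill _ _ hA' hB' x y h
  refine ⟨w, ?_, ?_⟩
  · have := Real.rpow_le_rpow dist_nonneg k1 hp0.le
    rwa [Real.rpow_inv_rpow hA hp0.ne'] at this
  · have := Real.rpow_le_rpow dist_nonneg k2 hp0.le
    rwa [Real.rpow_inv_rpow hB hp0.ne'] at this
end

section
/- Let (X,d) be a metric space that is locally compact, 2-point isometrically homogeneous, and admits dilations of every factor. Then (X,d) is metrically doubling: there is a constant C such that every closed ball of radius r > 0 in X can be covered by at most C closed balls of radius r/2. -/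
/-- A locally compact, 2-point isometrically homogeneous metric space admitting dilations of
every factor is metrically doubling: there is `C` such that every closed ball of radius
`r > 0` can be covered by at most `C` closed balls of radius `r/2`. -/
theorem doubling_of_homogeneous_dilations
    {X : Type*} [MetricSpace X] [LocallyCompactSpace X]
    (h2 : ∀ x₁ x₂ y₁ y₂ : X, dist x₁ x₂ = dist y₁ y₂ →
      ∃ f : X → X, Function.Surjective f ∧ (∀ u v, dist (f u) (f v) = dist u v) ∧
        f x₁ = y₁ ∧ f x₂ = y₂)
    (hdil : ∀ lam : ℝ, 0 < lam →
      ∃ f : X ≃ₜ X, ∀ x y, dist (f x) (f y) = lam * dist x y) :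
    ∃ C : ℕ, ∀ (x : X) (r : ℝ), 0 < r →
      ∃ s : Finset X, s.card ≤ C ∧
        Metric.closedBall x r ⊆ ⋃ y ∈ s, Metric.closedBall y (r / 2) := by
  classical
  rcases isEmpty_or_nonempty X with hX | ⟨⟨x0⟩⟩
  · exact ⟨0, fun x => (hX.false x).elim⟩
  obtain ⟨K, hK, hKn⟩ := exists_compact_mem_nhds x0
  obtain ⟨ρ, hρ, hsub⟩ := Metric.nhds_basis_closedBall.mem_iff.1 hKn
  have hc : IsCompact (Metric.closedBall x0 ρ) :=
    hK.of_isClosed_subset Metric.isClosed_closedBall hsub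
  obtain ⟨t, -, htf, hcov⟩ := hc.finite_cover_balls (half_pos hρ)
  refine ⟨htf.toFinset.card, fun x r hr => ?_⟩
  obtain ⟨f, hf⟩ := hdil (r / ρ) (div_pos hr hρ)
  obtain ⟨g, hgs, hg, hgx, -⟩ := h2 (f x0) (f x0) x x (by simp)
  refine ⟨htf.toFinset.image (fun y => g (f y)), Finset.card_image_le, fun z hz => ?_⟩
  obtain ⟨w, rfl⟩ := hgs z
  obtain ⟨u, rfl⟩ := f.surjective w
  have hu : u ∈ Metric.closedBall x0 ρ := by
    rw [Metric.mem_closedBall] at hz ⊢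
    rw [← hgx, hg, hf, div_mul_eq_mul_div, div_le_iff₀ hρ] at hz
    exact le_of_mul_le_mul_left hz hr
  have h := hcov hu
  simp only [Set.mem_iUnion, Metric.mem_ball] at h
  obtain ⟨y, hy, hd⟩ := h
  simp only [Set.mem_iUnion, Metric.mem_closedBall]
  refine ⟨g (f y), Finset.mem_image.2 ⟨y, htf.mem_toFinset.2 hy, rfl⟩, ?_⟩
  rw [hg, hf, div_mul_eq_mul_div, div_le_iff₀ hρ]
  nlinarith
end

section
/- Let (X,d) be a metric space with at least two points that is locally compact, 2-point isometrically homogeneous, and admits dilations of every factor, and suppose p ≥ 1 is such that d^p is a metric on X. Then p is at most the Hausdorff dimension of (X,d). -/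
/-- If a metric space with at least two points is locally compact, 2-point isometrically
homogeneous, admits dilations of every factor, and `p ≥ 1` is such that `d^p` is a metric
on `X`, then `p` is at most the Hausdorff dimension of `(X,d)`. -/
theorem p_le_hausdorff_dimension
    {X : Type*} [MetricSpace X] [LocallyCompactSpace X]
    (htwo : ∃ x y : X, x ≠ y)
    (h2 : ∀ x₁ x₂ y₁ y₂ : X, dist x₁ x₂ = dist y₁ y₂ →
      ∃ f : X → X, Function.Surjective f ∧ (∀ u v, dist (f u) (f v) = dist u v) ∧
        f x₁ = y₁ ∧ f x₂ = y₂)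
    (hdil : ∀ lam : ℝ, 0 < lam →
      ∃ f : X ≃ₜ X, ∀ x y, dist (f x) (f y) = lam * dist x y)
    (p : ℝ) (hp : 1 ≤ p)
    (htri : ∀ x y z : X, dist x z ^ p ≤ dist x y ^ p + dist y z ^ p) :
    ENNReal.ofReal p ≤ dimH (Set.univ : Set X) := by
  obtain ⟨x0, y0, hne⟩ := htwo
  have hd : 0 < dist x0 y0 := dist_pos.mpr hne
  have hp0 : 0 < p := by linarith
  have key : ∀ x y : X, dist x0 x ^ p - dist x0 y ^ p ≤ dist x y ^ p := by
    intro x y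
    have := htri x0 y x
    rw [dist_comm y x] at this
    linarith
  -- the function `x ↦ d(x0,x)^p` is `p`-Hölder
  have hH : HolderWith 1 (Real.toNNReal p) (fun x : X => dist x0 x ^ p) := by
    intro x y
    have h1 : dist (dist x0 x ^ p) (dist x0 y ^ p) ≤ dist x y ^ p := by
      rw [Real.dist_eq, abs_le]
      have a := key x y
      have b := key y x
      rw [dist_comm y x] at b
      constructor <;> linarith
    rw [edist_dist, edist_dist, Real.coe_toNNReal p hp0.le,
      ENNReal.ofReal_rpow_of_nonneg dist_nonneg hp0.le, ENNReal.coe_one, one_mul]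
    exact ENNReal.ofReal_le_ofReal h1
  -- it takes every positive value
  have hsub : Set.Ioi (0 : ℝ) ⊆ Set.range (fun x : X => dist x0 x ^ p) := by
    intro t ht
    have ht : 0 < t := ht
    have hr : 0 < t ^ p⁻¹ := Real.rpow_pos_of_pos ht _
    obtain ⟨f, hf⟩ := hdil (t ^ p⁻¹ / dist x0 y0) (div_pos hr hd)
    obtain ⟨g, -, hg, hg0, -⟩ := h2 (f x0) (f x0) x0 x0 (by simp)
    refine ⟨g (f y0), ?_⟩
    have : dist x0 (g (f y0)) = t ^ p⁻¹ := by
      calc dist x0 (g (f y0)) = dist (g (f x0)) (g (f y0)) := by rw [hg0]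
        _ = _ := by rw [hg, hf]; field_simp
    simp only [this]
    exact Real.rpow_inv_rpow ht.le hp0.ne'
  have hrpos : 0 < Real.toNNReal p := Real.toNNReal_pos.mpr hp0
  have hdim : dimH (Set.Ioi (0 : ℝ)) = 1 := by
    rw [Real.dimH_of_mem_nhds (x := (1 : ℝ)) (Ioi_mem_nhds one_pos)]; simp
  have h1 : (1 : ENNReal) ≤ dimH (Set.univ : Set X) / (Real.toNNReal p : ENNReal) := by
    rw [← hdim]
    exact (dimH_mono hsub).trans (hH.dimH_range_le hrpos)
  have h3 := (ENNReal.le_div_iff_mul_le (Or.inl (by simpa using hp0))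
    (Or.inl ENNReal.coe_ne_top)).mp h1
  rw [one_mul] at h3
  exact h3
end
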